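/- The dimension of 𝒞_n(v) as a ℂ(v)-vector space equals 3, 20, 217, 3364, 71098, 1960867 for n = 1, 2, 3, 4, 5, 6 respectively. -/

import Mathlib

noncomputable section

/-- The field `K = ℂ(v)` of rational functions over `ℂ`. -/
abbrev Kv : Type := RatFunc ℂ

/-- The variable `v ∈ ℂ(v)`. -/
noncomputable def vv : Kv := RatFunc.X

/-- The generator `g_i` of the free algebra (`.inl i ↦ g_i`). -/
noncomputable def bgF (n : ℕ) (i : Fin n) : FreeAlgebra Kv (Fin n ⊕ Fin n) :=
  FreeAlgebra.ι Kv (Sum.inl i)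

/-- The generator `e_i` of the free algebra (`.inr i ↦ e_i`). -/
noncomputable def beF (n : ℕ) (i : Fin n) : FreeAlgebra Kv (Fin n ⊕ Fin n) :=
  FreeAlgebra.ι Kv (Sum.inr i)

/-- Defining relations of the (type `A_n`) generalized algebra of braids and ties
`ℰ_n(v)`, for generators `g_1, …, g_n, e_1, …, e_n` (indexed here by `Fin n`,
with `|i − j|` rendered as `Nat.dist i j`). -/
inductive BTRel (n : ℕ) :
    FreeAlgebra Kv (Fin n ⊕ Fin n) → FreeAlgebra Kv (Fin n ⊕ Fin n) → Prop
  | gg_comm (i j : Fin n) (h : 2 ≤ Nat.dist i j) :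
      BTRel n (bgF n i * bgF n j) (bgF n j * bgF n i)
  | eg_comm (i j : Fin n) (h : 2 ≤ Nat.dist i j) :
      BTRel n (beF n i * bgF n j) (bgF n j * beF n i)
  | braid (i j : Fin n) (h : Nat.dist i j = 1) :
      BTRel n (bgF n i * bgF n j * bgF n i) (bgF n j * bgF n i * bgF n j)
  | egg (i j : Fin n) (h : Nat.dist i j = 1) :
      BTRel n (beF n i * bgF n j * bgF n i) (bgF n j * bgF n i * beF n j)
  | ee_comm (i j : Fin n) :
      BTRel n (beF n i * beF n j) (beF n j * beF n i)
  | e_idem (i : Fin n) :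
      BTRel n (beF n i * beF n i) (beF n i)
  | eg_same (i : Fin n) :
      BTRel n (beF n i * bgF n i) (bgF n i * beF n i)
  | eeg₁ (i j : Fin n) (h : Nat.dist i j = 1) :
      BTRel n (beF n i * beF n j * bgF n j) (beF n i * bgF n j * beF n i)
  | eeg₂ (i j : Fin n) (h : Nat.dist i j = 1) :
      BTRel n (beF n i * bgF n j * beF n i) (bgF n j * beF n i * beF n j)
  | quad (i : Fin n) :
      BTRel n (bgF n i * bgF n i)
        (1 + (vv ^ 2 - 1) • (beF n i * (1 + bgF n i)))

/-- The generalized algebra of braids and ties `ℰ_n(v)` in type `A_n`. -/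
abbrev BT (n : ℕ) := RingQuot (BTRel n)

/-- The generator `g_i` of `ℰ_n(v)`. -/
noncomputable def bg (n : ℕ) (i : Fin n) : BT n :=
  RingQuot.mkAlgHom Kv (BTRel n) (bgF n i)

/-- The generator `e_i` of `ℰ_n(v)`. -/
noncomputable def be (n : ℕ) (i : Fin n) : BT n :=
  RingQuot.mkAlgHom Kv (BTRel n) (beF n i)

/-- The subalgebra `𝒞_n(v) ⊆ ℰ_n(v)` generated by `g_1, …, g_n`. -/
noncomputable def BTC (n : ℕ) : Subalgebra Kv (BT n) :=
  Algebra.adjoin Kv (Set.range (bg n))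




open Equiv in
/-- adjacent transposition of positions -/
def sw {n : ℕ} (i : Fin n) : Equiv.Perm (Fin (n+1)) := Equiv.swap i.castSucc i.succ

abbrev MM (n : ℕ) : Type := Setoid (Fin (n+1)) × Equiv.Perm (Fin (n+1)) → Kv

open Classical in
def al {n : ℕ} (π : Setoid (Fin (n+1))) (a b : Fin (n+1)) : Kv :=
  if π a b ∧ a < b then vv^2 else 1

open Classical in
def bt {n : ℕ} (π : Setoid (Fin (n+1))) (a b : Fin (n+1)) : Kv :=
  if π a b ∧ b < a then vv^2 - 1 else 0

open Classical in
def ga {n : ℕ} (π : Setoid (Fin (n+1))) (a b : Fin (n+1)) : Kv :=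
  if π a b then 1 else 0

def opG (n : ℕ) (i : Fin n) : Module.End Kv (MM n) where
  toFun x p := al p.1 (p.2 i.castSucc) (p.2 i.succ) * x (p.1, p.2 * sw i)
    + bt p.1 (p.2 i.castSucc) (p.2 i.succ) * x p
  map_add' x y := by ext p; simp only [Pi.add_apply]; ring
  map_smul' c x := by ext p; simp only [Pi.smul_apply, smul_eq_mul, RingHom.id_apply]; ring

def opE (n : ℕ) (i : Fin n) : Module.End Kv (MM n) where
  toFun x p := ga p.1 (p.2 i.castSucc) (p.2 i.succ) * x p
  map_add' x y := by ext p; simp only [Pi.add_apply]; ring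
  map_smul' c x := by ext p; simp only [Pi.smul_apply, smul_eq_mul, RingHom.id_apply]; ring

lemma opG_apply {n : ℕ} (i : Fin n) (x : MM n) (π : Setoid (Fin (n+1))) (τ : Equiv.Perm (Fin (n+1))) :
    opG n i x (π, τ) = al π (τ i.castSucc) (τ i.succ) * x (π, τ * sw i)
    + bt π (τ i.castSucc) (τ i.succ) * x (π, τ) := rfl

lemma opE_apply {n : ℕ} (i : Fin n) (x : MM n) (π : Setoid (Fin (n+1))) (τ : Equiv.Perm (Fin (n+1))) :
    opE n i x (π, τ) = ga π (τ i.castSucc) (τ i.succ) * x (π, τ) := rfl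

lemma sw_left {n : ℕ} (i : Fin n) : sw i i.castSucc = i.succ := Equiv.swap_apply_left _ _
lemma sw_right {n : ℕ} (i : Fin n) : sw i i.succ = i.castSucc := Equiv.swap_apply_right _ _
lemma sw_of_ne {n : ℕ} (i : Fin n) (p : Fin (n+1)) (h1 : p ≠ i.castSucc) (h2 : p ≠ i.succ) :
    sw i p = p := Equiv.swap_apply_of_ne_of_ne h1 h2
lemma sw_mul_self {n : ℕ} (i : Fin n) : sw i * sw i = 1 := Equiv.swap_mul_self _ _
lemma sw_mul_self' {n : ℕ} (τ : Equiv.Perm (Fin (n+1))) (i : Fin n) : τ * sw i * sw i = τ := by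
  rw [mul_assoc, sw_mul_self, mul_one]

lemma sw_comm {n : ℕ} (i j : Fin n) (h : 2 ≤ Nat.dist i j) : sw i * sw j = sw j * sw i := by
  have hd : (i:ℕ) + 2 ≤ j ∨ (j:ℕ) + 2 ≤ i := by unfold Nat.dist at h; omega
  ext p
  by_cases h1 : p = i.castSucc
  · subst h1
    rw [Equiv.Perm.mul_apply, Equiv.Perm.mul_apply, sw_left, sw_of_ne j, sw_left, sw_of_ne j] <;>
      simp [Fin.ext_iff] <;> omega
  by_cases h2 : p = i.succ
  · subst h2
    rw [Equiv.Perm.mul_apply, Equiv.Perm.mul_apply, sw_right, sw_of_ne j, sw_right, sw_of_ne j] <;>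
      simp [Fin.ext_iff] <;> omega
  rw [Equiv.Perm.mul_apply, Equiv.Perm.mul_apply, sw_of_ne i p h1 h2, sw_of_ne i]
  · intro h3
    by_cases h4 : p = j.castSucc
    · subst h4; rw [sw_left] at h3; simp [Fin.ext_iff] at h3; omega
    by_cases h5 : p = j.succ
    · subst h5; rw [sw_right] at h3; simp [Fin.ext_iff] at h3; omega
    rw [sw_of_ne j p h4 h5] at h3; exact h1 h3
  · intro h3
    by_cases h4 : p = j.castSucc
    · subst h4; rw [sw_left] at h3; simp [Fin.ext_iff] at h3; omega
    by_cases h5 : p = j.succ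
    · subst h5; rw [sw_right] at h3; simp [Fin.ext_iff] at h3; omega
    rw [sw_of_ne j p h4 h5] at h3; exact h2 h3

lemma sw_braid {n : ℕ} (i j : Fin n) (h : (i:ℕ) + 1 = j) :
    sw i * sw j * sw i = sw j * sw i * sw j := by
  have e : i.succ = j.castSucc := by ext; simp [h]
  have h1 : i.castSucc ≠ j.castSucc := by simp [Fin.ext_iff]; omega
  have h2 : i.castSucc ≠ j.succ := by simp [Fin.ext_iff]; omega
  have h3 : j.castSucc ≠ j.succ := by simp [Fin.ext_iff]
  unfold sw
  rw [e]
  rw [Equiv.swap_mul_swap_mul_swap h1 h2, Equiv.swap_comm i.castSucc j.castSucc, Equiv.swap_comm j.castSucc j.succ,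
    Equiv.swap_mul_swap_mul_swap h3.symm h2.symm, Equiv.swap_comm]

lemma kv_q : (vv : Kv) ≠ 0 := RatFunc.X_ne_zero

lemma ga_sq {n : ℕ} (π : Setoid (Fin (n+1))) (a b) : ga π a b * ga π a b = ga π a b := by
  unfold ga; split_ifs <;> simp

lemma ga_comm {n : ℕ} (π : Setoid (Fin (n+1))) (a b) : ga π a b = ga π b a := by
  unfold ga; rw [π.comm' (x := a)]

lemma opGE_comm (n : ℕ) (i j : Fin n) (h : 2 ≤ Nat.dist i j) : opE n i * opG n j = opG n j * opE n i := by
  have hd : (i:ℕ) + 2 ≤ j ∨ (j:ℕ) + 2 ≤ i := by unfold Nat.dist at h; omega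
  ext1 x; funext ⟨π, τ⟩
  simp only [Module.End.mul_apply, opG_apply, opE_apply, Equiv.Perm.mul_apply]
  rw [sw_of_ne j i.castSucc, sw_of_ne j i.succ]
  · ring
  all_goals (simp [Fin.ext_iff]; try omega)

lemma opGG_comm (n : ℕ) (i j : Fin n) (h : 2 ≤ Nat.dist i j) : opG n i * opG n j = opG n j * opG n i := by
  have hd : (i:ℕ) + 2 ≤ j ∨ (j:ℕ) + 2 ≤ i := by unfold Nat.dist at h; omega
  ext1 x; funext ⟨π, τ⟩
  simp only [Module.End.mul_apply, opG_apply, Equiv.Perm.mul_apply]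
  rw [sw_of_ne j i.castSucc, sw_of_ne j i.succ, sw_of_ne i j.castSucc, sw_of_ne i j.succ,
    mul_assoc τ, mul_assoc τ, sw_comm i j h]
  · ring
  all_goals (simp [Fin.ext_iff]; try omega)

lemma opE_sq (n : ℕ) (i : Fin n) : opE n i * opE n i = opE n i := by
  ext1 x; funext ⟨π, τ⟩
  simp only [Module.End.mul_apply, opE_apply]
  rw [← mul_assoc, ga_sq]

lemma opEE (n : ℕ) (i j : Fin n) : opE n i * opE n j = opE n j * opE n i := by
  ext1 x; funext ⟨π, τ⟩
  simp only [Module.End.mul_apply, opE_apply]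
  ring

lemma opEG_same (n : ℕ) (i : Fin n) : opE n i * opG n i = opG n i * opE n i := by
  ext1 x; funext ⟨π, τ⟩
  simp only [Module.End.mul_apply, opE_apply, opG_apply, Equiv.Perm.mul_apply, sw_left, sw_right]
  rw [ga_comm π (τ i.succ)]; ring

lemma op_quad (n : ℕ) (i : Fin n) : opG n i * opG n i =
    1 + (vv ^ 2 - 1) • (opE n i * (1 + opG n i)) := by
  ext1 x; funext ⟨π, τ⟩
  have hne : τ i.castSucc ≠ τ i.succ := fun h => by
    have := τ.injective h; simp [Fin.ext_iff] at this
  simp only [Module.End.mul_apply, opE_apply, opG_apply, Equiv.Perm.mul_apply, sw_left, sw_right,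
    LinearMap.add_apply, LinearMap.smul_apply, Module.End.one_apply, Pi.add_apply, Pi.smul_apply,
    smul_eq_mul, sw_mul_self']
  unfold al bt ga
  rw [π.comm' (x := τ i.succ)]
  by_cases h1 : π (τ i.castSucc) (τ i.succ)
  · rcases lt_or_gt_of_ne hne with h2 | h2
    · simp [h1, h2, h2.not_gt]; ring
    · simp [h1, h2, h2.not_gt]; ring
  · simp [h1]

lemma adj_e {n : ℕ} (i j : Fin n) (h : (i:ℕ) + 1 = j) : i.succ = j.castSucc := by ext; simp [h]
lemma swi_2 {n : ℕ} (i j : Fin n) (h : (i:ℕ) + 1 = j) : sw i j.succ = j.succ := sw_of_ne _ _ (by simp [Fin.ext_iff]; omega) (by simp [Fin.ext_iff]; omega)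
lemma swj_0 {n : ℕ} (i j : Fin n) (h : (i:ℕ) + 1 = j) : sw j i.castSucc = i.castSucc := sw_of_ne _ _ (by simp [Fin.ext_iff]; omega) (by simp [Fin.ext_iff]; omega)
lemma swi_0 {n : ℕ} (i j : Fin n) (h : (i:ℕ) + 1 = j) : sw i i.castSucc = j.castSucc := by rw [sw_left, adj_e i j h]
lemma swi_1 {n : ℕ} (i j : Fin n) (h : (i:ℕ) + 1 = j) : sw i j.castSucc = i.castSucc := by rw [← adj_e i j h, sw_right]

lemma op_braid (n : ℕ) (i j : Fin n) (h : (i:ℕ) + 1 = j) :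
    opG n i * opG n j * opG n i = opG n j * opG n i * opG n j := by
  ext1 x; funext ⟨π, τ⟩
  have n1 : τ i.castSucc ≠ τ j.castSucc := fun h => by
    have := τ.injective h; simp [Fin.ext_iff] at this; omega
  have n2 : τ i.castSucc ≠ τ j.succ := fun h => by
    have := τ.injective h; simp [Fin.ext_iff] at this; omega
  have n3 : τ j.castSucc ≠ τ j.succ := fun h => by
    have := τ.injective h; simp [Fin.ext_iff] at this
  have hb : τ * sw j * sw i * sw j = τ * sw i * sw j * sw i := by
    simp only [mul_assoc]; rw [← mul_assoc (sw i), sw_braid i j h, mul_assoc]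
  simp only [Module.End.mul_apply, opG_apply, Equiv.Perm.mul_apply, adj_e i j h, sw_left j, sw_right j, swi_0 i j h,
    swi_1 i j h, swi_2 i j h, swj_0 i j h, sw_mul_self', hb]
  generalize τ i.castSucc = a at *
  generalize τ j.castSucc = b at *
  generalize τ j.succ = c at *
  generalize x (π, τ * sw i * sw j * sw i) = x1
  generalize x (π, τ * sw i * sw j) = x2
  generalize x (π, τ * sw j * sw i) = x3
  generalize x (π, τ * sw i) = x4
  generalize x (π, τ * sw j) = x5
  generalize x (π, τ) = x6
  unfold al bt
  rw [π.comm' (x := b) (y := a), π.comm' (x := c) (y := b)]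
  have t1 : π a b → π b c → π a c := π.trans'
  have t2 : π a b → π a c → π b c := fun u v => π.trans' (π.symm' u) v
  have t3 : π a c → π b c → π a b := fun u v => π.trans' u (π.symm' v)
  by_cases h1 : π a b <;> by_cases h2 : π b c <;> by_cases h3 : π a c <;>
  first
  | (exfalso; tauto)
  | (clear t1 t2 t3
     rcases lt_or_gt_of_ne n1 with o1 | o1 <;> rcases lt_or_gt_of_ne n2 with o2 | o2 <;>
      rcases lt_or_gt_of_ne n3 with o3 | o3 <;>
      first
      | (exfalso; order)
      | (simp only [h1, h2, h3, o1, o2, o3, o1.not_gt, o2.not_gt, o3.not_gt, and_true, and_false, false_and, true_and, if_true, if_false]; ring))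

lemma op_egg1 (n : ℕ) (i j : Fin n) (h : (i:ℕ) + 1 = j) :
    opE n i * opG n j * opG n i = opG n j * opG n i * opE n j := by
  ext1 x; funext ⟨π, τ⟩
  simp only [Module.End.mul_apply, opG_apply, opE_apply, Equiv.Perm.mul_apply, adj_e i j h, sw_left j, sw_right j, swi_0 i j h,
    swi_1 i j h, swi_2 i j h, swj_0 i j h, sw_mul_self']
  generalize τ i.castSucc = a at *
  generalize τ j.castSucc = b at *
  generalize τ j.succ = c at *
  unfold al bt ga
  rw [π.comm' (x := c) (y := b)]
  have t1 : π a b → π b c → π a c := π.trans'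
  have t2 : π a b → π a c → π b c := fun u v => π.trans' (π.symm' u) v
  have t3 : π a c → π b c → π a b := fun u v => π.trans' u (π.symm' v)
  by_cases h1 : π a b <;> by_cases h2 : π b c <;> by_cases h3 : π a c <;>
  first
  | (exfalso; tauto)
  | (simp [h1, h2, h3])

lemma op_egg2 (n : ℕ) (i j : Fin n) (h : (i:ℕ) + 1 = j) :
    opE n j * opG n i * opG n j = opG n i * opG n j * opE n i := by
  ext1 x; funext ⟨π, τ⟩
  simp only [Module.End.mul_apply, opG_apply, opE_apply, Equiv.Perm.mul_apply, adj_e i j h, sw_left j, sw_right j, swi_0 i j h,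
    swi_1 i j h, swi_2 i j h, swj_0 i j h, sw_mul_self']
  generalize τ i.castSucc = a at *
  generalize τ j.castSucc = b at *
  generalize τ j.succ = c at *
  unfold al bt ga
  rw [π.comm' (x := b) (y := a)]
  have t1 : π a b → π b c → π a c := π.trans'
  have t2 : π a b → π a c → π b c := fun u v => π.trans' (π.symm' u) v
  have t3 : π a c → π b c → π a b := fun u v => π.trans' u (π.symm' v)
  by_cases h1 : π a b <;> by_cases h2 : π b c <;> by_cases h3 : π a c <;>
  first
  | (exfalso; tauto)
  | (simp [h1, h2, h3])

lemma op_eeg (n : ℕ) (i j : Fin n) (h : Nat.dist i j = 1) :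
    opE n i * opE n j * opG n j = opE n i * opG n j * opE n i ∧
    opE n i * opG n j * opE n i = opG n j * opE n i * opE n j := by
  have hd : (i:ℕ) + 1 = j ∨ (j:ℕ) + 1 = i := by unfold Nat.dist at h; omega
  constructor <;> ext1 x <;> funext ⟨π, τ⟩ <;> rcases hd with h | h
  all_goals
    first
    | simp only [Module.End.mul_apply, opG_apply, opE_apply, Equiv.Perm.mul_apply, adj_e i j h, sw_left j, sw_right j, swi_0 i j h,
        swi_1 i j h, swi_2 i j h, swj_0 i j h, sw_mul_self']
      generalize τ i.castSucc = a at *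
      generalize τ j.castSucc = b at *
      generalize τ j.succ = c at *
      unfold al bt ga
      try rw [π.comm' (x := c) (y := b)]
      have t1 : π a b → π b c → π a c := π.trans'
      have t2 : π a b → π a c → π b c := fun u v => π.trans' (π.symm' u) v
      have t3 : π a c → π b c → π a b := fun u v => π.trans' u (π.symm' v)
      by_cases h1 : π a b <;> by_cases h2 : π b c <;> by_cases h3 : π a c <;>
      first
      | (exfalso; tauto)
      | (simp [h1, h2, h3])
    | simp only [Module.End.mul_apply, opG_apply, opE_apply, Equiv.Perm.mul_apply, adj_e j i h, sw_left i, sw_right i, swi_0 j i h,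
        swi_1 j i h, swi_2 j i h, swj_0 j i h, sw_mul_self']
      generalize τ j.castSucc = a at *
      generalize τ i.castSucc = b at *
      generalize τ i.succ = c at *
      unfold al bt ga
      try rw [π.comm' (x := b) (y := a)]
      have t1 : π a b → π b c → π a c := π.trans'
      have t2 : π a b → π a c → π b c := fun u v => π.trans' (π.symm' u) v
      have t3 : π a c → π b c → π a b := fun u v => π.trans' u (π.symm' v)
      by_cases h1 : π a b <;> by_cases h2 : π b c <;> by_cases h3 : π a c <;>
      first
      | (exfalso; tauto)
      | (simp [h1, h2, h3])

def preRep (n : ℕ) : FreeAlgebra Kv (Fin n ⊕ Fin n) →ₐ[Kv] Module.End Kv (MM n) :=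
  FreeAlgebra.lift Kv (Sum.elim (opG n) (opE n))

lemma preRep_g (n : ℕ) (i : Fin n) : preRep n (bgF n i) = opG n i := by
  simp [preRep, bgF]
lemma preRep_e (n : ℕ) (i : Fin n) : preRep n (beF n i) = opE n i := by
  simp [preRep, beF]

lemma preRep_rel (n : ℕ) {x y} (h : BTRel n x y) : preRep n x = preRep n y := by
  induction h with
  | gg_comm i j h => simpa only [map_mul, preRep_g] using opGG_comm n i j h
  | eg_comm i j h => simpa only [map_mul, preRep_g, preRep_e] using opGE_comm n i j h
  | braid i j h =>
    simp only [map_mul, preRep_g]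
    have hd : (i:ℕ) + 1 = j ∨ (j:ℕ) + 1 = i := by unfold Nat.dist at h; omega
    rcases hd with h | h
    · exact op_braid n i j h
    · exact (op_braid n j i h).symm
  | egg i j h =>
    simp only [map_mul, preRep_g, preRep_e]
    have hd : (i:ℕ) + 1 = j ∨ (j:ℕ) + 1 = i := by unfold Nat.dist at h; omega
    rcases hd with h | h
    · exact op_egg1 n i j h
    · exact op_egg2 n j i h
  | ee_comm i j => simpa only [map_mul, preRep_e] using opEE n i j
  | e_idem i => simpa only [map_mul, preRep_e] using opE_sq n i
  | eg_same i => simpa only [map_mul, preRep_g, preRep_e] using opEG_same n i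
  | eeg₁ i j h => simpa only [map_mul, preRep_g, preRep_e] using (op_eeg n i j h).1
  | eeg₂ i j h => simpa only [map_mul, preRep_g, preRep_e] using (op_eeg n i j h).2
  | quad i => simpa only [map_mul, map_add, map_one, map_smul, preRep_g, preRep_e] using op_quad n i

def repBT (n : ℕ) : BT n →ₐ[Kv] Module.End Kv (MM n) :=
  RingQuot.liftAlgHom Kv ⟨preRep n, fun _ _ h => preRep_rel n h⟩

lemma repBT_g (n : ℕ) (i : Fin n) : repBT n (bg n i) = opG n i := by
  simp [repBT, bg, preRep_g]
lemma repBT_e (n : ℕ) (i : Fin n) : repBT n (be n i) = opE n i := by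
  simp [repBT, be, preRep_e]



/-- conjugation by a unit -/
def cj {R : Type*} [Ring R] (u : Rˣ) (x : R) : R := ↑u * x * ↑u⁻¹

section cjs
variable {R : Type*} [Ring R]
lemma cj_mul (u v : Rˣ) (x : R) : cj (u * v) x = cj u (cj v x) := by
  simp [cj, mul_assoc]
lemma cj_one (x : R) : cj 1 x = x := by simp [cj]
lemma cj_hmul (u : Rˣ) (x y : R) : cj u (x * y) = cj u x * cj u y := by
  simp [cj, mul_assoc]
lemma cj_map_one (u : Rˣ) : cj u (1 : R) = 1 := by simp [cj]
lemma cj_inv_of (u : Rˣ) (x : R) (h : cj u x = x) : cj u⁻¹ x = x := by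
  conv_lhs => rw [← h]
  rw [← cj_mul]; simp [cj_one]
lemma cj_eq_of_comm (u : Rˣ) (x : R) (h : x * u = u * x) : cj u x = x := by
  simp [cj, ← h]
lemma cj_semi (u : Rˣ) (x : R) : (u : R) * x = cj u x * u := by simp [cj]
end cjs

/-- the relations used, with natural number indices and invertible `g` -/
structure BTD (n : ℕ) {R : Type*} [Ring R] [Algebra Kv R] (g : ℕ → Rˣ) (e : ℕ → R) : Prop where
  gg : ∀ i j, i + 2 ≤ j → j < n → g i * g j = g j * g i
  eg1 : ∀ i j, i + 2 ≤ j → j < n → e i * g j = g j * e i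
  eg2 : ∀ i j, i + 2 ≤ j → j < n → e j * g i = g i * e j
  br : ∀ i, i + 1 < n → g i * g (i+1) * g i = g (i+1) * g i * g (i+1)
  egg1 : ∀ i, i + 1 < n → e i * g (i+1) * g i = g (i+1) * g i * e (i+1)
  egg2 : ∀ i, i + 1 < n → e (i+1) * g i * g (i+1) = g i * g (i+1) * e i
  ee : ∀ i j, i < n → j < n → e i * e j = e j * e i
  idem : ∀ i, i < n → e i * e i = e i
  egs : ∀ i, i < n → e i * g i = g i * e i
  eeg1 : ∀ i, i + 1 < n → e i * e (i+1) * g (i+1) = e i * g (i+1) * e i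
  eeg2 : ∀ i, i + 1 < n → e i * g (i+1) * e i = g (i+1) * e i * e (i+1)
  quad : ∀ i, i < n → (g i : R) * g i = 1 + (vv^2 - 1) • (e i * (1 + g i))

/-- `eT g e i d` is the tie between `i` and `i + d + 1` -/
def eT {R : Type*} [Ring R] (g : ℕ → Rˣ) (e : ℕ → R) (i : ℕ) : ℕ → R
  | 0 => e i
  | (d+1) => cj (g (i+d+1)) (eT g e i d)

section tie
variable {n : ℕ} {R : Type*} [Ring R] [Algebra Kv R] {g : ℕ → Rˣ} {e : ℕ → R}

lemma eT_a1 (H : BTD n g e) (i d k : ℕ) (h : i + d + 2 ≤ k) (hk : k < n) :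
    cj (g k) (eT g e i d) = eT g e i d := by
  induction d with
  | zero => exact cj_eq_of_comm _ _ (H.eg1 i k (by omega) hk)
  | succ d ih =>
    rw [eT, ← cj_mul, ← H.gg (i+d+1) k (by omega) hk, cj_mul, ih (by omega)]

lemma eT_a2 (H : BTD n g e) (i d k : ℕ) (h : k + 2 ≤ i) (hk : i + d < n) :
    cj (g k) (eT g e i d) = eT g e i d := by
  induction d with
  | zero => exact cj_eq_of_comm _ _ (H.eg2 k i (by omega) hk)
  | succ d ih =>
    rw [eT, ← cj_mul, H.gg k (i+d+1) (by omega) (by omega), cj_mul, ih (by omega)]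

lemma eT_L0 (H : BTD n g e) (i : ℕ) (h : i + 1 < n) :
    cj (g (i+1)) (cj (g (i+1)) (e i)) = e i := by
  rw [← cj_mul]
  apply cj_eq_of_comm
  have h1 : e i * (e (i+1) * g (i+1)) = e (i+1) * g (i+1) * e i := by
    rw [← mul_assoc, H.eeg1 i h, H.eeg2 i h, mul_assoc, H.ee i (i+1) (by omega) h, ← mul_assoc,
      ← H.egs (i+1) h]
  rw [Units.val_mul, H.quad (i+1) h]
  simp only [mul_add, add_mul, mul_one, one_mul, smul_add, mul_smul_comm, smul_mul_assoc]
  rw [h1, H.ee i (i+1) (by omega) h]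

lemma eT_L (H : BTD n g e) (i d : ℕ) (h : i + d + 1 < n) :
    cj (g (i+d+1)) (cj (g (i+d+1)) (eT g e i d)) = eT g e i d := by
  induction d with
  | zero => exact eT_L0 H i h
  | succ d ih =>
    have hb := H.br (i+d+1) (by omega)
    have hx := eT_a1 H i d (i+d+1+1) (by omega) (by omega)
    rw [eT]
    have : g (i+d+1+1) * g (i+d+1+1) * g (i+d+1) =
        g (i+d+1) * g (i+d+1+1) * g (i+d+1) * g (i+d+1) * (g (i+d+1+1))⁻¹ := by
      rw [eq_mul_inv_iff_mul_eq, hb]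
      simp only [mul_assoc] at hb ⊢
      rw [hb]
    show cj (g (i+d+1+1)) (cj (g (i+d+1+1)) _) = _
    rw [← cj_mul, ← cj_mul, this]
    simp only [cj_mul]
    rw [cj_inv_of _ _ hx, ih (by omega), hx]

lemma eT_d (H : BTD n g e) (i d k : ℕ) (h : i < k) (h2 : k + 2 ≤ i + d + 1) (hn : i + d < n) :
    cj (g k) (eT g e i d) = eT g e i d := by
  induction d with
  | zero => omega
  | succ d ih =>
    by_cases hc : k + 2 ≤ i + d + 1
    · rw [eT, ← cj_mul, H.gg k (i+d+1) (by omega) (by omega), cj_mul, ih hc (by omega)]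
    · obtain ⟨d, rfl⟩ : ∃ d', d = d' + 1 := ⟨d - 1, by omega⟩
      obtain rfl : k = i + d + 1 := by omega
      have hb := H.br (i+d+1) (by omega)
      have hx := eT_a1 H i d (i+d+1+1) (by omega) (by omega)
      rw [eT, eT]
      show cj _ (cj (g (i+d+1+1)) _) = cj (g (i+d+1+1)) _
      rw [← cj_mul, ← cj_mul, hb, cj_mul, hx, cj_mul]

lemma eT_e (H : BTD n g e) (i d : ℕ) (hn : i + d + 1 < n) :
    cj (g i) (eT g e i (d+1)) = eT g e (i+1) d := by
  induction d with
  | zero =>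
    show cj (g i) (cj (g (i+1)) (e i)) = e (i+1)
    rw [← cj_mul, cj, Units.val_mul, ← H.egg2 i (by omega), mul_assoc (e (i+1)), ← Units.val_mul, mul_assoc, ← Units.val_mul]
    simp
  | succ d ih =>
    have ih := ih (by omega)
    rw [eT, ← cj_mul, H.gg i (i+(d+1)+1) (by omega) (by omega), cj_mul, ih]
    rw [eT]
    congr 2; omega

lemma eT_f2 (H : BTD n g e) (i d : ℕ) (hn : i + d + 1 < n) :
    cj (g i) (cj (g i) (eT g e i (d+1))) = eT g e i (d+1) := by
  induction d with
  | zero =>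
    have hb := H.br i (by omega)
    have hx : cj (g i) (e i) = e i := cj_eq_of_comm _ _ (H.egs i (by omega))
    show cj (g i) (cj (g i) (cj (g (i+1)) (e i))) = cj (g (i+1)) (e i)
    have : g i * g i * g (i+1) = g (i+1) * g i * g (i+1) * g (i+1) * (g i)⁻¹ := by
      rw [eq_mul_inv_iff_mul_eq]
      simp only [mul_assoc] at hb ⊢
      rw [hb, ← mul_assoc, ← mul_assoc, mul_assoc (g i), hb]; simp only [mul_assoc]
    rw [← cj_mul, ← cj_mul, this]
    simp only [cj_mul]
    rw [cj_inv_of _ _ hx, eT_L0 H i (by omega), hx]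
  | succ d ih =>
    have hg := H.gg i (i+(d+1)+1) (by omega) (by omega)
    rw [eT, ← cj_mul, ← cj_mul, mul_assoc, hg, ← mul_assoc, hg, mul_assoc, cj_mul, cj_mul, ih (by omega)]

/-- tie between arbitrary positions -/
def ES (n : ℕ) (g : ℕ → Rˣ) (e : ℕ → R) (i j : Fin (n+1)) : R :=
  if (i:ℕ) < j then eT g e i (j - i - 1) else if (j:ℕ) < i then eT g e j (i - j - 1) else 1

lemma ES_symm (i j : Fin (n+1)) : ES n g e i j = ES n g e j i := by
  unfold ES; split_ifs <;> first | rfl | omega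

lemma ES_self (i : Fin (n+1)) : ES n g e i i = 1 := by simp [ES]

lemma ES_lt (i j : Fin (n+1)) (d : ℕ) (h : (j:ℕ) = i + d + 1) : ES n g e i j = eT g e i d := by
  unfold ES; rw [if_pos (by omega)]; congr 1; omega

lemma ES_conj_lt (H : BTD n g e) (k : Fin n) (i j : Fin (n+1)) (hij : (i:ℕ) < j) :
    cj (g k) (ES n g e i j) = ES n g e (sw k i) (sw k j) := by
  obtain ⟨d, hd⟩ : ∃ d, (j:ℕ) = i + d + 1 := ⟨j - i - 1, by omega⟩
  rw [ES_lt i j d hd]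
  have hk := k.2
  have hj := j.2
  by_cases i0 : i = k.castSucc
  · subst i0
    simp only [Fin.val_castSucc] at *
    by_cases j0 : j = k.succ
    · subst j0
      obtain rfl : d = 0 := by simp at hd; omega
      rw [sw_left, sw_right, ES_symm, ES_lt _ _ 0 (by simp)]
      exact cj_eq_of_comm _ _ (H.egs k hk)
    · rw [sw_left, sw_of_ne _ _ _ j0]
      · simp only [Fin.ext_iff, Fin.val_succ] at j0
        obtain ⟨d, rfl⟩ : ∃ d', d = d' + 1 := ⟨d - 1, by omega⟩
        rw [eT_e H _ _ (by omega), ES_lt _ _ d (by simp; omega)]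
        simp
      · simp [Fin.ext_iff]; omega
  by_cases i1 : i = k.succ
  · subst i1
    simp only [Fin.val_succ] at *
    rw [sw_right, sw_of_ne _ j (by simp [Fin.ext_iff]; omega) (by simp [Fin.ext_iff]; omega)]
    rw [ES_lt _ _ (d+1) (by simp; omega), ← eT_e H _ _ (by omega), eT_f2 H _ _ (by omega)]
    simp
  rw [sw_of_ne k i i0 i1]
  simp only [Fin.ext_iff, Fin.val_succ, Fin.val_castSucc] at i0 i1
  by_cases j0 : j = k.castSucc
  · subst j0
    simp only [Fin.val_castSucc] at *
    rw [sw_left, ES_lt _ _ (d+1) (by simp; omega), eT, hd]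
  by_cases j1 : j = k.succ
  · subst j1
    simp only [Fin.val_succ] at *
    obtain ⟨d, rfl⟩ : ∃ d', d = d' + 1 := ⟨d - 1, by omega⟩
    rw [sw_right, ES_lt _ _ d (by simp; omega), eT]
    have : (k:ℕ) = i + d + 1 := by omega
    rw [this]
    exact eT_L H _ _ (by omega)
  rw [sw_of_ne k j j0 j1, ES_lt i j d hd]
  simp only [Fin.ext_iff, Fin.val_succ, Fin.val_castSucc] at j0 j1
  by_cases h1 : (i:ℕ) + d + 2 ≤ k
  · exact eT_a1 H _ _ _ h1 hk
  by_cases h2 : (k:ℕ) + 2 ≤ i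
  · exact eT_a2 H _ _ _ h2 (by omega)
  exact eT_d H _ _ _ (by omega) (by omega) (by omega)

lemma ES_conj (H : BTD n g e) (k : Fin n) (i j : Fin (n+1)) :
    cj (g k) (ES n g e i j) = ES n g e (sw k i) (sw k j) := by
  rcases lt_trichotomy (i:ℕ) j with h | h | h
  · exact ES_conj_lt H k i j h
  · obtain rfl : i = j := Fin.ext h
    rw [ES_self, ES_self, cj_map_one]
  · rw [ES_symm, ES_symm (sw k i)]; exact ES_conj_lt H k j i h

lemma ES_conj_perm (H : BTD n g e) (w : Equiv.Perm (Fin (n+1))) :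
    ∃ u : Rˣ, ∀ i j, cj u (ES n g e i j) = ES n g e (w i) (w j) := by
  have hw : w ∈ Submonoid.closure (Set.range fun i : Fin n => Equiv.swap i.castSucc i.succ) := by
    rw [Equiv.Perm.mclosure_swap_castSucc_succ]; trivial
  induction hw using Submonoid.closure_induction with
  | mem x hx => obtain ⟨k, rfl⟩ := hx; exact ⟨g k, ES_conj H k⟩
  | one => exact ⟨1, fun i j => cj_one _⟩
  | mul x y _ _ hx hy =>
    obtain ⟨u, hu⟩ := hx
    obtain ⟨v, hv⟩ := hy
    exact ⟨u * v, fun i j => by rw [cj_mul, hv, hu]; rfl⟩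

lemma exists_perm {m N : ℕ} (f f' : Fin m ↪ Fin N) : ∃ w : Equiv.Perm (Fin N), ∀ i, w (f i) = f' i := by
  have := Equiv.Perm.isMultiplyPretransitive (Fin N) m
  obtain ⟨w, hw⟩ := this.exists_smul_eq f f'
  exact ⟨w, fun i => by rw [← hw]; rfl⟩

lemma inj2 {N : ℕ} {i j : Fin N} (h : i ≠ j) : Function.Injective ![i, j] := by
  intro a b; fin_cases a <;> fin_cases b <;> simp [h, h.symm]
lemma inj3 {N : ℕ} {i j k : Fin N} (h : i ≠ j) (h1 : i ≠ k) (h2 : j ≠ k) : Function.Injective ![i, j, k] := by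
  intro a b; fin_cases a <;> fin_cases b <;> simp [h, h.symm, h1, h2, h1.symm, h2.symm]
lemma inj4 {N : ℕ} {i j k l : Fin N} (h : i ≠ j) (h1 : i ≠ k) (h2 : j ≠ k) (h3 : i ≠ l) (h4 : j ≠ l) (h5 : k ≠ l) : Function.Injective ![i, j, k, l] := by
  intro a b; fin_cases a <;> fin_cases b <;> simp [h, h.symm, h1, h2, h1.symm, h2.symm, h3, h4, h5, h3.symm, h4.symm, h5.symm]

lemma exists_perm2 {N : ℕ} {i j : Fin N} (h : i ≠ j) (h0 : 2 ≤ N) :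
    ∃ w : Equiv.Perm (Fin N), w ⟨0, by omega⟩ = i ∧ w ⟨1, by omega⟩ = j := by
  obtain ⟨w, hw⟩ := exists_perm ⟨_, inj2 (N := N) (i := ⟨0, by omega⟩) (j := ⟨1, by omega⟩) (by simp)⟩ ⟨_, inj2 h⟩
  exact ⟨w, hw 0, hw 1⟩
lemma exists_perm3 {N : ℕ} {i j k : Fin N} (h : i ≠ j) (h1 : i ≠ k) (h2 : j ≠ k) (h0 : 3 ≤ N) :
    ∃ w : Equiv.Perm (Fin N), w ⟨0, by omega⟩ = i ∧ w ⟨1, by omega⟩ = j ∧ w ⟨2, by omega⟩ = k := by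
  obtain ⟨w, hw⟩ := exists_perm ⟨_, inj3 (N := N) (i := ⟨0, by omega⟩) (j := ⟨1, by omega⟩)
    (k := ⟨2, by omega⟩) (by simp) (by simp) (by simp)⟩ ⟨_, inj3 h h1 h2⟩
  exact ⟨w, hw 0, hw 1, hw 2⟩
lemma exists_perm4 {N : ℕ} {i j k l : Fin N} (h : i ≠ j) (h1 : i ≠ k) (h2 : j ≠ k) (h3 : i ≠ l) (h4 : j ≠ l) (h5 : k ≠ l)
    (h0 : 4 ≤ N) :
    ∃ w : Equiv.Perm (Fin N), w ⟨0, by omega⟩ = i ∧ w ⟨1, by omega⟩ = j ∧ w ⟨2, by omega⟩ = k ∧ w ⟨3, by omega⟩ = l := by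
  obtain ⟨w, hw⟩ := exists_perm ⟨_, inj4 (N := N) (i := ⟨0, by omega⟩) (j := ⟨1, by omega⟩)
    (k := ⟨2, by omega⟩) (l := ⟨3, by omega⟩) (by simp) (by simp) (by simp) (by simp) (by simp) (by simp)⟩ ⟨_, inj4 h h1 h2 h3 h4 h5⟩
  exact ⟨w, hw 0, hw 1, hw 2, hw 3⟩

lemma ES_idem (H : BTD n g e) (i j : Fin (n+1)) : ES n g e i j * ES n g e i j = ES n g e i j := by
  by_cases h : i = j
  · subst h; simp [ES_self]
  have hN : 2 ≤ n + 1 := by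
    have := Fintype.card_le_of_injective _ (inj2 h)
    simpa using this
  obtain ⟨w, rfl, rfl⟩ := exists_perm2 h hN
  obtain ⟨u, hu⟩ := ES_conj_perm H w
  rw [← hu, ← cj_hmul, ES_lt _ _ 0 (by simp)]
  exact congrArg _ (H.idem 0 (by omega))

lemma ES_e (k : ℕ) (hk : k < n) : ES n g e ⟨k, by omega⟩ ⟨k+1, by omega⟩ = e k := by
  rw [ES_lt _ _ 0 (by simp)]; rfl

lemma ES_comm3 (H : BTD n g e) (i j k : Fin (n+1)) :
    ES n g e i j * ES n g e j k = ES n g e j k * ES n g e i j := by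
  by_cases h : i = j
  · subst h; simp [ES_self]
  by_cases h1 : i = k
  · subst h1; rw [ES_symm]
  by_cases h2 : j = k
  · subst h2; simp [ES_self]
  have hN : 3 ≤ n + 1 := by
    have := Fintype.card_le_of_injective _ (inj3 h h1 h2)
    simpa using this
  obtain ⟨w, rfl, rfl, rfl⟩ := exists_perm3 h h1 h2 hN
  obtain ⟨u, hu⟩ := ES_conj_perm H w
  rw [← hu, ← hu, ← cj_hmul, ← cj_hmul, ES_e 0 (by omega), ES_e 1 (by omega), H.ee _ _ (by omega) (by omega)]

lemma ES_comm (H : BTD n g e) (i j k l : Fin (n+1)) :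
    ES n g e i j * ES n g e k l = ES n g e k l * ES n g e i j := by
  by_cases h : i = j
  · subst h; simp [ES_self]
  by_cases h1 : i = k
  · subst h1; rw [ES_symm i j]; exact ES_comm3 H _ _ _
  by_cases h2 : j = k
  · subst h2; exact ES_comm3 H _ _ _
  by_cases h3 : i = l
  · subst h3; rw [ES_symm i j, ES_symm k]; exact ES_comm3 H _ _ _
  by_cases h4 : j = l
  · subst h4; rw [ES_symm k]; exact ES_comm3 H _ _ _
  by_cases h5 : k = l
  · subst h5; simp [ES_self]
  have hN : 4 ≤ n + 1 := by
    have := Fintype.card_le_of_injective _ (inj4 h h1 h2 h3 h4 h5)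
    simpa using this
  obtain ⟨w, rfl, rfl, rfl, rfl⟩ := exists_perm4 h h1 h2 h3 h4 h5 hN
  obtain ⟨u, hu⟩ := ES_conj_perm H w
  rw [← hu, ← hu, ← cj_hmul, ← cj_hmul, ES_e 0 (by omega), ES_e 2 (by omega), H.ee _ _ (by omega) (by omega)]

lemma ES_trans (H : BTD n g e) (i j k : Fin (n+1)) :
    ES n g e i j * ES n g e j k * ES n g e i k = ES n g e i j * ES n g e j k := by
  by_cases h : i = j
  · subst h; simp [ES_self, ES_idem H]
  by_cases h1 : i = k
  · subst h1; simp [ES_self]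
  by_cases h2 : j = k
  · subst h2; simp [ES_self, ES_idem H]
  have hN : 3 ≤ n + 1 := by
    have := Fintype.card_le_of_injective _ (inj3 h h1 h2)
    simpa using this
  obtain ⟨w, rfl, rfl, rfl⟩ := exists_perm3 h h1 h2 hN
  obtain ⟨u, hu⟩ := ES_conj_perm H w
  rw [← hu, ← hu, ← hu, ← cj_hmul, ← cj_hmul, ES_e 0 (by omega), ES_e 1 (by omega), ES_lt _ _ 1 (by simp)]
  congr 1
  have h1 : e 0 * eT g e 0 1 = e 0 * e 1 := by
    show e 0 * cj (g 1) (e 0) = _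
    rw [cj, ← mul_assoc, ← mul_assoc, ← H.eeg1 0 (by omega)]
    simp
  rw [H.ee 0 1 (by omega) (by omega)]
  show e 1 * e 0 * eT g e 0 1 = e 1 * e 0
  rw [mul_assoc, h1, H.ee 0 1 (by omega) (by omega), ← mul_assoc, H.idem 1 (by omega)]

/-- the monoid of ties -/
def Mn (n : ℕ) (g : ℕ → Rˣ) (e : ℕ → R) : Submonoid R :=
  Submonoid.closure (Set.range fun p : Fin (n+1) × Fin (n+1) => ES n g e p.1 p.2)

lemma ES_mem (i j : Fin (n+1)) : ES n g e i j ∈ Mn n g e :=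
  Submonoid.subset_closure ⟨(i, j), rfl⟩

lemma Mn_comm_ES (H : BTD n g e) {z : R} (hz : z ∈ Mn n g e) (i j : Fin (n+1)) :
    z * ES n g e i j = ES n g e i j * z := by
  induction hz using Submonoid.closure_induction with
  | mem x hx => obtain ⟨⟨k, l⟩, rfl⟩ := hx; exact ES_comm H _ _ _ _
  | one => simp
  | mul x y _ _ hx hy => rw [mul_assoc, hy, ← mul_assoc, hx, mul_assoc]

lemma Mn_comm (H : BTD n g e) {z z' : R} (hz : z ∈ Mn n g e) (hz' : z' ∈ Mn n g e) :
    z * z' = z' * z := by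
  induction hz' using Submonoid.closure_induction with
  | mem x hx => obtain ⟨⟨k, l⟩, rfl⟩ := hx; exact Mn_comm_ES H hz _ _
  | one => simp
  | mul x y _ _ hx hy => rw [← mul_assoc, hx, mul_assoc, hy, mul_assoc]

def zSet (n : ℕ) (g : ℕ → Rˣ) (e : ℕ → R) (H : BTD n g e) (z : Mn n g e) : Setoid (Fin (n+1)) where
  r i j := (z : R) * ES n g e i j = z
  iseqv := by
    refine ⟨fun i => by simp [ES_self], fun {i j} h => by rw [ES_symm]; exact h, fun {i j k} h1 h2 => ?_⟩
    have : (z : R) = z * (ES n g e i j * ES n g e j k) := by rw [← mul_assoc, h1, h2]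
    rw [this, mul_assoc, ES_trans H]

lemma zSet_absorb (H : BTD n g e) (z : Mn n g e) (z' : R) (hz' : z' ∈ Mn n g e)
    (h : ∀ i j, z' * ES n g e i j = z' → (z : R) * ES n g e i j = z) : (z : R) * z' = z := by
  induction hz' using Submonoid.closure_induction with
  | mem x hx => obtain ⟨⟨k, l⟩, rfl⟩ := hx; exact h _ _ (ES_idem H _ _)
  | one => simp
  | mul x y hx' hy' hx hy =>
    rw [← mul_assoc, hx, hy]
    · intro i j hij; apply h; rw [mul_assoc, hij]
    · intro i j hij; apply h; rw [Mn_comm H hx' hy', mul_assoc, hij]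

lemma zSet_inj (H : BTD n g e) : Function.Injective (zSet n g e H) := by
  intro z z' h
  have h' : ∀ i j, (z : R) * ES n g e i j = z ↔ (z' : R) * ES n g e i j = z' := by
    intro i j
    exact iff_of_eq (congrArg (fun s : Setoid _ => s i j) h)
  apply Subtype.ext
  rw [← zSet_absorb H z z' z'.2 (fun i j => (h' i j).2), Mn_comm H z.2 z'.2,
    zSet_absorb H z' z z.2 (fun i j => (h' i j).1)]
end tie


instance setoidFinite (m : ℕ) : Finite (Setoid (Fin m)) :=
  Finite.of_injective (fun s : Setoid (Fin m) => fun a b => s a b) (by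
    intro s t h; ext a b; exact iff_of_eq (congrFun (congrFun h a) b))

section span1
variable {n : ℕ} {R : Type*} [Ring R] [Algebra Kv R] {g : ℕ → Rˣ} {e : ℕ → R}

/-- descending products of generators -/
def Dd (g : ℕ → Rˣ) (k : ℕ) : ℕ → Rˣ
  | 0 => 1
  | (c+1) => Dd g k c * g (k - c - 1)

open Classical in
/-- normal form words -/
def GG (g : ℕ → Rˣ) : ℕ → Finset Rˣ
  | 0 => {1}
  | (k+1) => Finset.image₂ (fun x c => x * Dd g k c) (GG g k) (Finset.range (k+1))

open Classical in
lemma GG_card (k : ℕ) : (GG g k).card ≤ k.factorial := by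
  induction k with
  | zero => simp [GG]
  | succ k ih =>
    rw [GG]
    refine (Finset.card_image₂_le _ _ _).trans ?_
    rw [Finset.card_range, Nat.factorial_succ, mul_comm]
    exact Nat.mul_le_mul_left _ ih

def Nz (n : ℕ) (g : ℕ → Rˣ) (e : ℕ → R) (x : Rˣ) : Prop :=
  ∃ w : Equiv.Perm (Fin (n+1)), ∀ i j, cj x (ES n g e i j) = ES n g e (w i) (w j)

lemma Nz_mul {x y : Rˣ} (hx : Nz n g e x) (hy : Nz n g e y) : Nz n g e (x * y) := by
  obtain ⟨u, hu⟩ := hx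
  obtain ⟨v, hv⟩ := hy
  exact ⟨u * v, fun i j => by rw [cj_mul, hv, hu]; rfl⟩

lemma Nz_one : Nz n g e 1 := ⟨1, fun i j => cj_one _⟩

lemma Nz_g (H : BTD n g e) (i : ℕ) (hi : i < n) : Nz n g e (g i) := ⟨sw ⟨i, hi⟩, ES_conj H ⟨i, hi⟩⟩

lemma Nz_D (H : BTD n g e) (k c : ℕ) (hk : k ≤ n) (hc : c ≤ k) : Nz n g e (Dd g k c) := by
  induction c with
  | zero => exact Nz_one
  | succ c ih => exact Nz_mul (ih (by omega)) (Nz_g H _ (by omega))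

open Classical in
lemma Nz_G (H : BTD n g e) (k : ℕ) (hk : k ≤ n + 1) {x : Rˣ} (hx : x ∈ GG g k) : Nz n g e x := by
  induction k generalizing x with
  | zero => simp [GG] at hx; subst hx; exact Nz_one
  | succ k ih =>
    rw [GG, Finset.mem_image₂] at hx
    obtain ⟨y, hy, c, hc, rfl⟩ := hx
    exact Nz_mul (ih (by omega) hy) (Nz_D H k c (by omega) (by simp at hc; omega))

def SS (n : ℕ) (g : ℕ → Rˣ) (e : ℕ → R) (k : ℕ) : Submodule Kv R :=
  Submodule.span Kv {y | ∃ z ∈ Mn n g e, ∃ x ∈ GG g k, y = z * x}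

lemma SS_left (k : ℕ) {z s : R} (hz : z ∈ Mn n g e) (hs : s ∈ SS n g e k) : z * s ∈ SS n g e k := by
  induction hs using Submodule.span_induction with
  | mem x hx =>
    obtain ⟨z', hz', x, hx, rfl⟩ := hx
    exact Submodule.subset_span ⟨z * z', mul_mem hz hz', x, hx, by rw [mul_assoc]⟩
  | zero => simp
  | add x y _ _ hx hy => rw [mul_add]; exact add_mem hx hy
  | smul a x _ hx => rw [mul_smul_comm]; exact Submodule.smul_mem _ _ hx

lemma SS_right_of (k m : ℕ) (r : R) (h : ∀ z ∈ Mn n g e, ∀ x ∈ GG g k, z * x * r ∈ SS n g e m)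
    {s : R} (hs : s ∈ SS n g e k) : s * r ∈ SS n g e m := by
  induction hs using Submodule.span_induction with
  | mem x hx =>
    obtain ⟨z', hz', x, hx, rfl⟩ := hx
    exact h z' hz' x hx
  | zero => simp
  | add x y _ _ hx hy => rw [add_mul]; exact add_mem hx hy
  | smul a x _ hx => rw [smul_mul_assoc]; exact Submodule.smul_mem _ _ hx

lemma SS_ES (H : BTD n g e) (k : ℕ) (hk : k ≤ n + 1) (i j : Fin (n+1)) {s : R} (hs : s ∈ SS n g e k) :
    s * ES n g e i j ∈ SS n g e k := by
  refine SS_right_of k k _ (fun z hz x hx => ?_) hs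
  obtain ⟨w, hw⟩ := Nz_G H k hk hx
  rw [mul_assoc, cj_semi, hw, ← mul_assoc]
  exact Submodule.subset_span ⟨_, mul_mem hz (ES_mem _ _), x, hx, rfl⟩

lemma SS_e (H : BTD n g e) (k : ℕ) (hk : k ≤ n + 1) (i : ℕ) (hi : i < n) {s : R} (hs : s ∈ SS n g e k) :
    s * e i ∈ SS n g e k := by
  rw [← ES_e (n := n) (g := g) (e := e) i hi]; exact SS_ES H k hk _ _ hs

open Classical in
lemma SS_D (k c : ℕ) (hc : c ≤ k) {s : R} (hs : s ∈ SS n g e k) :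
    s * Dd g k c ∈ SS n g e (k+1) := by
  refine SS_right_of k (k+1) _ (fun z hz x hx => ?_) hs
  refine Submodule.subset_span ⟨z, hz, x * Dd g k c, ?_, by simp [mul_assoc]⟩
  rw [GG, Finset.mem_image₂]
  exact ⟨x, hx, c, by simp; omega, rfl⟩

lemma Dd_comm (H : BTD n g e) (k c i : ℕ) (hk : k ≤ n) (h : c = 0 ∨ i + c + 2 ≤ k) :
    Dd g k c * g i = g i * Dd g k c := by
  induction c with
  | zero => simp [Dd]
  | succ c ih =>
    rw [Dd, mul_assoc, ← H.gg i (k-c-1) (by omega) (by omega), ← mul_assoc, ih (by omega), mul_assoc]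

lemma Dd_braid (H : BTD n g e) (k c i : ℕ) (hk : k ≤ n) (hc : c ≤ k) (hi : i + 2 ≤ k) (h : k < i + 1 + c) :
    Dd g k c * g (i+1) = g i * Dd g k c := by
  induction c with
  | zero => omega
  | succ c ih =>
    by_cases hh : k < i + 1 + c
    · rw [Dd, mul_assoc, H.gg (k-c-1) (i+1) (by omega) (by omega), ← mul_assoc, ih (by omega) hh, mul_assoc]
    · obtain ⟨c, rfl⟩ : ∃ c', c = c' + 1 := ⟨c - 1, by omega⟩
      rw [Dd, Dd]
      have h1 : k - c - 1 = i + 1 := by omega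
      have h2 : k - (c+1) - 1 = i := by omega
      rw [h1, h2]
      have := H.br i (by omega)
      have h3 := Dd_comm H k c i hk (by omega)
      rw [← mul_assoc, ← mul_assoc, ← h3]
      rw [mul_assoc, mul_assoc, ← mul_assoc (g (i+1)), ← this]
      simp only [mul_assoc]

open Classical in
lemma SS_g (H : BTD n g e) (k : ℕ) (hk : k ≤ n + 1) (i : ℕ) (hi : i + 2 ≤ k) {s : R} (hs : s ∈ SS n g e k) :
    s * g i ∈ SS n g e k := by
  induction k generalizing i s with
  | zero => omega
  | succ k ih =>
    refine SS_right_of (k+1) (k+1) _ (fun z hz y hy => ?_) hs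
    rw [GG, Finset.mem_image₂] at hy
    obtain ⟨x, hx, c, hc, rfl⟩ := hy
    have hc : c ≤ k := by simp at hc; omega
    have hzx : z * x ∈ SS n g e k := Submodule.subset_span ⟨z, hz, x, hx, rfl⟩
    rw [Units.val_mul, ← mul_assoc]
    rcases lt_trichotomy (i + c) k with h1 | h1 | h1
    · by_cases h2 : i + c + 1 = k
      · have : Dd g k c * g i = Dd g k (c+1) := by
          rw [Dd]; congr 2; omega
        rw [mul_assoc _ _ (g i : R), ← Units.val_mul, this]
        exact SS_D k (c+1) (by omega) hzx
      · rw [mul_assoc _ _ (g i : R), ← Units.val_mul, Dd_comm H k c i (by omega) (by omega),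
          Units.val_mul, ← mul_assoc]
        exact SS_D k c hc (ih (by omega) i (by omega) hzx)
    · obtain ⟨c, rfl⟩ : ∃ c', c = c' + 1 := ⟨c - 1, by omega⟩
      have h3 : Dd g k (c+1) = Dd g k c * g i := by
        rw [Dd]; congr 2; omega
      have hq := H.quad i (by omega)
      have hA := SS_D (g := g) k c (by omega) hzx
      have hB := SS_D (g := g) k (c+1) (by omega) hzx
      have : z * x * (Dd g k (c+1) : R) * g i = z * x * Dd g k c + (vv^2-1) • (z * x * Dd g k c * e i)
         + (vv^2-1) • (z * x * Dd g k (c+1) * e i) := by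
        rw [h3, Units.val_mul, mul_assoc, mul_assoc (Dd g k c : R), hq, mul_add (e i), mul_one,
          H.egs i (by omega)]
        simp only [mul_add, smul_add, mul_smul_comm, mul_assoc, mul_one]
        rw [add_assoc]
      rw [this]
      exact add_mem (add_mem hA (Submodule.smul_mem _ _ (SS_e H _ hk i (by omega) hA)))
        (Submodule.smul_mem _ _ (SS_e H _ hk i (by omega) hB))
    · obtain ⟨i, rfl⟩ : ∃ c', i = c' + 1 := ⟨i - 1, by omega⟩
      rw [mul_assoc _ _ (g (i+1) : R), ← Units.val_mul, Dd_braid H k c i (by omega) hc (by omega) (by omega),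
          Units.val_mul, ← mul_assoc]
      exact SS_D k c hc (ih (by omega) i (by omega) hzx)

open Classical in
lemma GG_one (k : ℕ) : 1 ∈ GG g k := by
  induction k with
  | zero => simp [GG]
  | succ k ih =>
    rw [GG, Finset.mem_image₂]
    exact ⟨1, ih, 0, by simp, by simp [Dd]⟩

lemma SS_one (k : ℕ) : (1:R) ∈ SS n g e k :=
  Submodule.subset_span ⟨1, one_mem _, 1, GG_one k, by simp⟩

lemma BTD_finrank (H : BTD n g e) (hS : SS n g e (n+1) = ⊤) :
    Module.Finite Kv R ∧ Module.finrank Kv R ≤ Nat.card (Setoid (Fin (n+1))) * (n+1).factorial := by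
  classical
  haveI : Finite (Mn n g e) := Finite.of_injective _ (zSet_inj H)
  haveI := Fintype.ofFinite (Mn n g e)
  let F : Finset R := Finset.image₂ (fun (z : Mn n g e) (x : Rˣ) => (z : R) * x) Finset.univ (GG g (n+1))
  have hF : Submodule.span Kv (F : Set R) = ⊤ := by
    rw [← hS, SS]
    congr 1
    ext y
    simp [F, Finset.mem_image₂, eq_comm]
  refine ⟨⟨⟨F, hF⟩⟩, ?_⟩
  have h1 : Module.finrank Kv R ≤ F.card := by
    have := finrank_span_finset_le_card (R := Kv) F
    rwa [Set.finrank, hF, finrank_top] at this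
  refine h1.trans ((Finset.card_image₂_le _ _ _).trans ?_)
  refine Nat.mul_le_mul ?_ (GG_card _)
  rw [Finset.card_univ, ← Nat.card_eq_fintype_card]
  exact Nat.card_le_card_of_injective _ (zSet_inj H)
end span1


section inst
variable (n : ℕ)

lemma bt_rel {n : ℕ} {x y : FreeAlgebra Kv (Fin n ⊕ Fin n)} (h : BTRel n x y) :
    RingQuot.mkAlgHom Kv (BTRel n) x = RingQuot.mkAlgHom Kv (BTRel n) y :=
  RingQuot.mkAlgHom_rel Kv h

lemma bg_quad (i : Fin n) : bg n i * bg n i = 1 + (vv^2-1) • (be n i * (1 + bg n i)) := by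
  have := bt_rel (BTRel.quad i)
  simpa [bg, be] using this
lemma bg_egs (i : Fin n) : be n i * bg n i = bg n i * be n i := by
  have := bt_rel (BTRel.eg_same i)
  simpa [bg, be] using this
lemma be_idem (i : Fin n) : be n i * be n i = be n i := by
  have := bt_rel (BTRel.e_idem i)
  simpa [bg, be] using this

lemma bg_inv_aux (i : Fin n) :
    bg n i * (bg n i + ((vv^2)⁻¹ - 1) • (be n i * (1 + bg n i))) = 1 := by
  have q := bg_quad n i
  have c := bg_egs n i
  have e : ∀ X : BT n, (vv^2-1 : Kv) • X = vv^2 • X - X := fun X =>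
    (sub_smul (vv^2 : Kv) (1 : Kv) X).trans (by rw [one_smul])
  have h1 : bg n i * (be n i * (1 + bg n i)) = vv^2 • (be n i * (1 + bg n i)) := by
    rw [← mul_assoc, ← c, mul_assoc, mul_add (bg n i), mul_one, q, mul_add (be n i), mul_add (be n i),
      mul_smul_comm, ← mul_assoc (be n i), be_idem, e, mul_add (be n i) 1]
    abel
  rw [mul_add, q, mul_smul_comm, h1, smul_smul, add_assoc, ← add_smul]
  have : (vv^2 - 1 + ((vv^2)⁻¹ - 1) * vv^2 : Kv) = 0 := by
    have := kv_q
    field_simp; ring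
  rw [this]; simp

lemma bg_inv_comm (i : Fin n) :
    (bg n i + ((vv^2)⁻¹ - 1) • (be n i * (1 + bg n i))) * bg n i =
    bg n i * (bg n i + ((vv^2)⁻¹ - 1) • (be n i * (1 + bg n i))) := by
  have c := bg_egs n i
  rw [mul_add (bg n i), add_mul, mul_smul_comm, smul_mul_assoc, ← mul_assoc, ← c]
  simp only [mul_assoc, mul_add, add_mul, mul_one, one_mul]

def gU (i : ℕ) : (BT n)ˣ := if h : i < n then
    ⟨bg n ⟨i, h⟩, bg n ⟨i, h⟩ + ((vv^2)⁻¹ - 1) • (be n ⟨i, h⟩ * (1 + bg n ⟨i, h⟩)),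
      bg_inv_aux n _, (bg_inv_comm n _).trans (bg_inv_aux n _)⟩ else 1
def eU (i : ℕ) : BT n := if h : i < n then be n ⟨i, h⟩ else 1

lemma gU_val (i : ℕ) (h : i < n) : (gU n i : BT n) = bg n ⟨i, h⟩ := by simp [gU, h]
lemma eU_val (i : ℕ) (h : i < n) : eU n i = be n ⟨i, h⟩ := by simp [eU, h]

lemma btd : BTD n (gU n) (eU n) := by
  constructor
  · intro i j h hj
    ext; push_cast
    rw [gU_val n i (by omega), gU_val n j hj]
    have := bt_rel (BTRel.gg_comm (n := n) ⟨i, by omega⟩ ⟨j, hj⟩ (by simp [Nat.dist]; omega))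
    simpa [bg, be] using this
  · intro i j h hj
    rw [eU_val n i (by omega), gU_val n j hj]
    have := bt_rel (BTRel.eg_comm (n := n) ⟨i, by omega⟩ ⟨j, hj⟩ (by simp [Nat.dist]; omega))
    simpa [bg, be] using this
  · intro i j h hj
    rw [gU_val n i (by omega), eU_val n j hj]
    have := bt_rel (BTRel.eg_comm (n := n) ⟨j, hj⟩ ⟨i, by omega⟩ (by simp [Nat.dist]; omega))
    simpa [bg, be] using this
  · intro i h
    ext; push_cast
    rw [gU_val n i (by omega), gU_val n (i+1) h]
    have := bt_rel (BTRel.braid (n := n) ⟨i, by omega⟩ ⟨i+1, h⟩ (by simp [Nat.dist]))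
    simpa [bg, be] using this
  · intro i h
    rw [gU_val n i (by omega), gU_val n (i+1) h, eU_val n i (by omega), eU_val n (i+1) h]
    have := bt_rel (BTRel.egg (n := n) ⟨i, by omega⟩ ⟨i+1, h⟩ (by simp [Nat.dist]))
    simpa [bg, be] using this
  · intro i h
    rw [gU_val n i (by omega), gU_val n (i+1) h, eU_val n i (by omega), eU_val n (i+1) h]
    have := bt_rel (BTRel.egg (n := n) ⟨i+1, h⟩ ⟨i, by omega⟩ (by simp [Nat.dist]))
    simpa [bg, be] using this
  · intro i j hi hj
    rw [eU_val n i hi, eU_val n j hj]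
    have := bt_rel (BTRel.ee_comm (n := n) ⟨i, hi⟩ ⟨j, hj⟩)
    simpa [bg, be] using this
  · intro i hi
    rw [eU_val n i hi, be_idem]
  · intro i hi
    rw [eU_val n i hi, gU_val n i hi, bg_egs]
  · intro i h
    rw [gU_val n (i+1) h, eU_val n i (by omega), eU_val n (i+1) h]
    have := bt_rel (BTRel.eeg₁ (n := n) ⟨i, by omega⟩ ⟨i+1, h⟩ (by simp [Nat.dist]))
    simpa [bg, be] using this
  · intro i h
    rw [gU_val n (i+1) h, eU_val n i (by omega), eU_val n (i+1) h]
    have := bt_rel (BTRel.eeg₂ (n := n) ⟨i, by omega⟩ ⟨i+1, h⟩ (by simp [Nat.dist]))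
    simpa [bg, be] using this
  · intro i hi
    rw [eU_val n i hi, gU_val n i hi, bg_quad]

lemma SS_top : SS n (gU n) (eU n) (n+1) = ⊤ := by
  have key : ∀ a : FreeAlgebra Kv (Fin n ⊕ Fin n), ∀ s ∈ SS n (gU n) (eU n) (n+1),
      s * RingQuot.mkAlgHom Kv (BTRel n) a ∈ SS n (gU n) (eU n) (n+1) := by
    intro a
    induction a using FreeAlgebra.induction with
    | grade0 r =>
      intro s hs
      rw [AlgHom.commutes, ← Algebra.commutes, ← Algebra.smul_def]
      exact Submodule.smul_mem _ _ hs
    | grade1 x =>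
      intro s hs
      rcases x with i | i
      · have := SS_g (btd n) (n+1) le_rfl i (by omega) hs
        rwa [gU_val n i i.2] at this
      · have := SS_e (btd n) (n+1) le_rfl i (by omega) hs
        rwa [eU_val n i i.2] at this
    | mul a b ha hb =>
      intro s hs
      rw [map_mul, ← mul_assoc]
      exact hb _ (ha _ hs)
    | add a b ha hb =>
      intro s hs
      rw [map_add, mul_add]
      exact add_mem (ha _ hs) (hb _ hs)
  rw [eq_top_iff]
  intro x _
  obtain ⟨a, rfl⟩ := RingQuot.mkAlgHom_surjective Kv (BTRel n) x
  simpa using key a 1 (SS_one _)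

lemma BT_finite : Module.Finite Kv (BT n) := (BTD_finrank (btd n) (SS_top n)).1
lemma BT_finrank : Module.finrank Kv (BT n) ≤ Nat.card (Setoid (Fin (n+1))) * (n+1).factorial :=
  (BTD_finrank (btd n) (SS_top n)).2
lemma MM_finrank : Module.finrank Kv (MM n) = Nat.card (Setoid (Fin (n+1))) * (n+1).factorial := by
  classical
  haveI := Fintype.ofFinite (Setoid (Fin (n+1)))
  unfold MM
  rw [Module.finrank_fintype_fun_eq_card, Fintype.card_prod, Fintype.card_perm, Nat.card_eq_fintype_card]
  simp
end inst


section surj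
variable {n : ℕ}

lemma sw_ne' (i : Fin n) : i.castSucc ≠ i.succ := by simp [Fin.ext_iff]

lemma swl (τ : Equiv.Perm (Fin (n+1))) (i : Fin n) : (τ * sw i) i.castSucc = τ i.succ := by
  rw [Equiv.Perm.mul_apply, sw_left]
lemma swr (τ : Equiv.Perm (Fin (n+1))) (i : Fin n) : (τ * sw i) i.succ = τ i.castSucc := by
  rw [Equiv.Perm.mul_apply, sw_right]
lemma swn (τ : Equiv.Perm (Fin (n+1))) (i : Fin n) (k : Fin (n+1)) (h1 : k ≠ i.castSucc) (h2 : k ≠ i.succ) :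
    (τ * sw i) k = τ k := by
  rw [Equiv.Perm.mul_apply, sw_of_ne i k h1 h2]

lemma perm_ind (β : Fin (n+1) → ℕ) (P : Equiv.Perm (Fin (n+1)) → Prop)
    (base : ∀ τ : Equiv.Perm (Fin (n+1)), Monotone (fun k => β (τ k)) → P τ)
    (step : ∀ (τ : Equiv.Perm (Fin (n+1))) (i : Fin n), β (τ i.succ) < β (τ i.castSucc) → P (τ * sw i) → P τ) :
    ∀ τ, P τ := by
  suffices h : ∀ m : ℕ, ∀ τ : Equiv.Perm (Fin (n+1)), (∑ k : Fin (n+1), (n - k) * β (τ k)) ≤ m → P τ from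
    fun τ => h _ τ le_rfl
  intro m
  induction m using Nat.strong_induction_on with
  | _ m ih =>
    intro τ hm
    by_cases hmono : Monotone (fun k => β (τ k))
    · exact base τ hmono
    rw [Fin.monotone_iff_le_succ] at hmono
    push Not at hmono
    obtain ⟨i, hi⟩ := hmono
    have key : (∑ k : Fin (n+1), (n - k) * β ((τ * sw i) k)) < ∑ k : Fin (n+1), (n - k) * β (τ k) := by
      rw [← Nat.cast_lt (α := ℤ), Nat.cast_sum, Nat.cast_sum]
      simp only [Nat.cast_mul]
      rw [← sub_pos, ← Finset.sum_sub_distrib, Fintype.sum_eq_add i.castSucc i.succ (sw_ne' i)]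
      · rw [swl, swr]
        have h1 : ((n - (i.castSucc : ℕ) : ℕ) : ℤ) = n - i := by simp
        have h2 : ((n - (i.succ : ℕ) : ℕ) : ℤ) = n - i - 1 := by
          rw [Fin.val_succ]; omega
        rw [h1, h2]
        zify at hi
        nlinarith
      · rintro k ⟨h1, h2⟩
        rw [swn _ i k h1 h2, sub_self]
    exact step τ i hi (ih _ (lt_of_lt_of_le key hm) _ le_rfl)

def UU (τ : Equiv.Perm (Fin (n+1))) : MM n := fun p => if p.2 = τ then 1 else 0

lemma mul_sw_eq {τ ω : Equiv.Perm (Fin (n+1))} {i : Fin n} : ω * sw i = τ * sw i ↔ ω = τ :=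
  mul_left_inj _

lemma mul_sw_eq' {τ ω : Equiv.Perm (Fin (n+1))} {i : Fin n} : ω * sw i = τ ↔ ω = τ * sw i := by
  constructor
  · rintro rfl; rw [sw_mul_self']
  · rintro rfl; rw [sw_mul_self']

lemma opG_UU (τ : Equiv.Perm (Fin (n+1))) (i : Fin n) (h : τ i.succ < τ i.castSucc) :
    opG n i (UU (τ * sw i)) = UU τ := by
  ext ⟨π, ω⟩
  rw [opG_apply]
  simp only [UU, mul_sw_eq]
  by_cases h1 : ω = τ
  · subst h1
    rw [if_pos rfl, if_neg (by intro h2; have := congrArg (fun f => f i.castSucc) h2; simp [Equiv.Perm.mul_apply, sw_left] at this; exact absurd this (sw_ne' i))]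
    simp [al, h.le]
  · rw [if_neg h1]
    by_cases h2 : ω = τ * sw i
    · subst h2
      rw [swl, swr]
      simp [bt, h.le]
    · simp [h2]

lemma UU_mem_of (W : Submodule Kv (MM n)) (hG : ∀ i, ∀ x ∈ W, opG n i x ∈ W) (h1 : UU 1 ∈ W) (τ) : UU τ ∈ W := by
  refine perm_ind (fun a => (a : ℕ)) (fun τ => UU τ ∈ W) ?_ ?_ τ
  · intro τ hτ
    have : τ = 1 := by
      have hm : StrictMono τ := Monotone.strictMono_of_injective (fun a b hab => hτ hab) τ.injective
      ext a
      have h2 := (hm.range_inj strictMono_id).1 (by simp [τ.surjective.range_eq])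
      rw [h2]; rfl
    rw [this]; exact h1
  · intro τ i hi hP
    rw [← opG_UU τ i hi]
    exact hG _ _ hP

/-- labels of blocks -/
def bl (π : Setoid (Fin (n+1))) (a : Fin (n+1)) : ℕ := ((Quotient.out (Quotient.mk π a) : Fin (n+1)) : ℕ)

lemma bl_eq (π : Setoid (Fin (n+1))) (a b : Fin (n+1)) : bl π a = bl π b ↔ π a b := by
  unfold bl
  rw [← Fin.ext_iff, Quotient.out_inj, Quotient.eq]

lemma chain_aux {π π' : Setoid (Fin (n+1))} {τ : Equiv.Perm (Fin (n+1))} (hm : Monotone fun k => bl π (τ k))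
    (h : ∀ i : Fin n, π (τ i.castSucc) (τ i.succ) → π' (τ i.castSucc) (τ i.succ)) :
    ∀ (d : ℕ) (k l : Fin (n+1)), (l:ℕ) = k + d → π (τ k) (τ l) → π' (τ k) (τ l) := by
  intro d
  induction d with
  | zero =>
    intro k l hkl _
    obtain rfl : l = k := Fin.ext hkl
    exact π'.refl _
  | succ d ih =>
    intro k l hkl hπ
    have hl := l.2
    let m : Fin n := ⟨k + d, by omega⟩
    have hml : m.succ = l := by ext; simp [m]; omega
    have hkm : k ≤ m.castSucc := by simp [Fin.le_def, m]
    have hml' : m.castSucc ≤ l := by simp [Fin.le_def, m]; omega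
    have e1 := hm hkm
    have e2 := hm hml'
    have e3 := (bl_eq π _ _).2 hπ
    simp only at e1 e2
    have h1 : π (τ k) (τ m.castSucc) := (bl_eq π _ _).1 (by omega)
    have h2 : π (τ m.castSucc) (τ l) := (bl_eq π _ _).1 (by omega)
    refine π'.trans (ih k m.castSucc (by simp [m]) h1) ?_
    rw [← hml] at h2 ⊢
    exact h m h2

lemma le_of_chain {π π' : Setoid (Fin (n+1))} {τ : Equiv.Perm (Fin (n+1))} (hm : Monotone fun k => bl π (τ k))
    (h : ∀ i : Fin n, π (τ i.castSucc) (τ i.succ) → π' (τ i.castSucc) (τ i.succ)) : π ≤ π' := by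
  intro a b hab
  obtain ⟨k, rfl⟩ := τ.surjective a
  obtain ⟨l, rfl⟩ := τ.surjective b
  rcases le_total k l with hkl | hkl
  · exact chain_aux hm h (l - k) k l (by rw [Fin.le_def] at hkl; omega) hab
  · exact π'.symm (chain_aux hm h (k - l) l k (by rw [Fin.le_def] at hkl; omega) (π.symm hab))

open Classical in
def dl (π : Setoid (Fin (n+1))) (τ : Equiv.Perm (Fin (n+1))) : MM n := Pi.single (π, τ) 1

open Classical in
lemma dl_apply (π π' : Setoid (Fin (n+1))) (τ τ' : Equiv.Perm (Fin (n+1))) :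
    dl π τ (π', τ') = if π' = π ∧ τ' = τ then 1 else 0 := by
  unfold dl
  rw [Pi.single_apply]; simp [Prod.ext_iff]

lemma opG_dl (π : Setoid (Fin (n+1))) (τ : Equiv.Perm (Fin (n+1))) (i : Fin n)
    (h : ¬ π (τ i.castSucc) (τ i.succ)) : opG n i (dl π (τ * sw i)) = dl π τ := by
  classical
  ext ⟨π', ω⟩
  rw [opG_apply, dl_apply, dl_apply, dl_apply]
  simp only [mul_sw_eq]
  have h' : ¬ π (τ i.succ) (τ i.castSucc) := fun hh => h (π.symm hh)
  by_cases h1 : π' = π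
  · subst h1
    by_cases h1 : ω = τ
    · subst h1
      simp [al, bt, h]
    · by_cases h2 : ω = τ * sw i
      · subst h2
        rw [swl, swr]
        simp [bt, h', h1]
      · simp [h1, h2]
  · simp [h1]

open Classical in
lemma prodE_UU (W : Submodule Kv (MM n)) (hE : ∀ i, ∀ x ∈ W, opE n i x ∈ W) (τ : Equiv.Perm (Fin (n+1)))
    (h1 : UU τ ∈ W) (S : Finset (Fin n)) :
    (fun p : Setoid (Fin (n+1)) × Equiv.Perm (Fin (n+1)) =>
      if p.2 = τ ∧ ∀ i ∈ S, p.1 (τ i.castSucc) (τ i.succ) then (1:Kv) else 0) ∈ W := by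
  induction S using Finset.induction_on with
  | empty =>
    convert h1 using 1
    ext p; simp [UU]
  | insert a S ha ih =>
    have := hE a _ ih
    convert this using 1
    ext ⟨π, ω⟩
    rw [opE_apply]
    by_cases h2 : ω = τ
    · subst h2
      simp only [ga, Finset.forall_mem_insert, true_and]
      by_cases hA : π (ω a.castSucc) (ω a.succ) <;> simp [hA]
    · simp [h2]

theorem W_top (W : Submodule Kv (MM n)) (hG : ∀ i, ∀ x ∈ W, opG n i x ∈ W)
    (hE : ∀ i, ∀ x ∈ W, opE n i x ∈ W) (h1 : UU 1 ∈ W) : W = ⊤ := by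
  classical
  haveI := Fintype.ofFinite (Setoid (Fin (n+1)))
  have hU := UU_mem_of W hG h1
  have expand : ∀ x : MM n, (∀ p, x p ≠ 0 → dl p.1 p.2 ∈ W) → x ∈ W := by
    intro x hx
    rw [pi_eq_sum_univ' x]
    refine sum_mem fun p _ => ?_
    by_cases h0 : x p = 0
    · rw [h0, zero_smul]; exact zero_mem _
    · have := Submodule.smul_mem W (x p) (hx p h0)
      convert this using 2
      ext q
      simp [dl, Pi.single_apply, eq_comm]
  have key : ∀ π τ, dl π τ ∈ W := by
    intro π
    induction π using WellFoundedGT.induction with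
    | ind π ih =>
      intro τ
      refine perm_ind (bl π) (fun τ => dl π τ ∈ W) ?_ ?_ τ
      · intro τ hm
        have hX := prodE_UU W hE τ (hU τ) (Finset.univ.filter fun i : Fin n => π (τ i.castSucc) (τ i.succ))
        set X : MM n := (fun p : Setoid (Fin (n+1)) × Equiv.Perm (Fin (n+1)) =>
          if p.2 = τ ∧ ∀ i ∈ (Finset.univ.filter fun i : Fin n => π (τ i.castSucc) (τ i.succ)), p.1 (τ i.castSucc) (τ i.succ) then (1:Kv) else 0) with hXdef
        have hd : X - dl π τ ∈ W := by
          apply expand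
          rintro ⟨π', ω⟩ hne
          refine ih π' ?_ ω
          rw [Pi.sub_apply, dl_apply, hXdef] at hne
          by_cases hc : ω = τ ∧ ∀ i ∈ (Finset.univ.filter fun i : Fin n => π (τ i.castSucc) (τ i.succ)), π' (τ i.castSucc) (τ i.succ)
          · have hle : π ≤ π' := le_of_chain hm (fun i hi => hc.2 i (by simpa using hi))
            refine lt_of_le_of_ne hle ?_
            rintro rfl
            simp only [if_pos hc] at hne
            simp [hc.1] at hne
          · exfalso
            apply hne
            simp only [if_neg hc]
            rw [if_neg, sub_zero]
            rintro ⟨rfl, rfl⟩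
            exact hc ⟨rfl, fun i hi => by simpa using hi⟩
        have := sub_mem hX hd
        rwa [sub_sub_cancel] at this
      · intro τ i hi hP
        rw [← opG_dl π τ i (fun h => by rw [(bl_eq π _ _).2 h] at hi; exact lt_irrefl _ hi)]
        exact hG _ _ hP
  rw [eq_top_iff]
  exact fun x _ => expand x (fun p _ => key _ _)

def Phi (n : ℕ) : BT n →ₗ[Kv] MM n := (LinearMap.applyₗ (UU 1)).comp (repBT n).toLinearMap

lemma Phi_apply (x : BT n) : Phi n x = repBT n x (UU 1) := rfl

lemma Phi_inj : Function.Injective (Phi n) := by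
  haveI := BT_finite n
  haveI : Finite (Setoid (Fin (n+1)) × Equiv.Perm (Fin (n+1))) := inferInstance
  have hs : LinearMap.range (Phi n) = ⊤ := by
    apply W_top
    · rintro i _ ⟨x, rfl⟩
      exact ⟨bg n i * x, by rw [Phi_apply, map_mul, repBT_g]; rfl⟩
    · rintro i _ ⟨x, rfl⟩
      exact ⟨be n i * x, by rw [Phi_apply, map_mul, repBT_e]; rfl⟩
    · exact ⟨1, by rw [Phi_apply, map_one]; rfl⟩
  have hr := LinearMap.finrank_range_add_finrank_ker (Phi n)
  rw [hs, finrank_top, MM_finrank] at hr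
  have := BT_finrank n
  rw [← LinearMap.ker_eq_bot, ← Submodule.finrank_eq_zero (R := Kv)]
  omega

/-- algebra generated by the operators `opG` -/
def Cop (n : ℕ) : Subalgebra Kv (Module.End Kv (MM n)) := Algebra.adjoin Kv (Set.range (opG n))

def VV (n : ℕ) : Submodule Kv (MM n) := (Subalgebra.toSubmodule (Cop n)).map (LinearMap.applyₗ (UU 1))

lemma mem_VV {x : MM n} : x ∈ VV n ↔ ∃ z ∈ Cop n, z (UU 1) = x := Iff.rfl

lemma Cop_map : (BTC n).map (repBT n) = Cop n := by
  rw [BTC, AlgHom.map_adjoin, Cop]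
  congr 1
  rw [← Set.range_comp]
  congr 1
  ext1 i
  exact repBT_g n i

lemma finrank_BTC : Module.finrank Kv (BTC n) = Module.finrank Kv (VV n) := by
  have : VV n = (Subalgebra.toSubmodule (BTC n)).map (Phi n) := by
    rw [VV, ← Cop_map]
    ext x
    simp [Submodule.mem_map, Phi_apply]
  rw [this]
  exact (LinearEquiv.finrank_eq (Submodule.equivMapOfInjective (Phi n) Phi_inj (Subalgebra.toSubmodule (BTC n))))

lemma VV_G (i : Fin n) {x : MM n} (hx : x ∈ VV n) : opG n i x ∈ VV n := by
  obtain ⟨z, hz, rfl⟩ := mem_VV.1 hx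
  exact mem_VV.2 ⟨opG n i * z, mul_mem (Algebra.subset_adjoin ⟨i, rfl⟩) hz, rfl⟩

lemma VV_C {z : Module.End Kv (MM n)} (hz : z ∈ Cop n) {x : MM n} (hx : x ∈ VV n) : z x ∈ VV n := by
  obtain ⟨y, hy, rfl⟩ := mem_VV.1 hx
  exact mem_VV.2 ⟨z * y, mul_mem hz hy, rfl⟩

lemma UU_VV (τ) : UU τ ∈ VV n :=
  UU_mem_of _ (fun i x hx => VV_G i hx) (mem_VV.2 ⟨1, one_mem _, rfl⟩) τ
end surj


section upper
variable {n : ℕ}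

open Classical in
def spl (π : Setoid (Fin (n+1))) (a : Fin (n+1)) : Setoid (Fin (n+1)) where
  r b c := b = c ∨ (π b c ∧ ¬ π a b)
  iseqv := by
    refine ⟨fun b => Or.inl rfl, fun {b c} h => ?_, fun {b c d} h h' => ?_⟩
    · rcases h with rfl | ⟨h1, h2⟩
      · exact Or.inl rfl
      · exact Or.inr ⟨π.symm h1, fun h3 => h2 (π.trans h3 (π.symm h1))⟩
    · rcases h with rfl | ⟨h1, h2⟩
      · exact h'
      · rcases h' with rfl | ⟨h3, h4⟩
        · exact Or.inr ⟨h1, h2⟩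
        · exact Or.inr ⟨π.trans h1 h3, h2⟩

lemma spl_rel (π : Setoid (Fin (n+1))) (a b c : Fin (n+1)) : spl π a b c ↔ b = c ∨ (π b c ∧ ¬ π a b) := Iff.rfl

open Classical in
def Ag (π : Setoid (Fin (n+1))) (a : Fin (n+1)) : Finset (Equiv.Perm (Fin (n+1))) :=
  Finset.univ.filter fun σ => ∀ c, ¬ π a c → σ c = c

lemma mem_Ag {π : Setoid (Fin (n+1))} {a : Fin (n+1)} {σ : Equiv.Perm (Fin (n+1))} :
    σ ∈ Ag π a ↔ ∀ c, ¬ π a c → σ c = c := by simp [Ag]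

lemma Ag_class {π : Setoid (Fin (n+1))} {a : Fin (n+1)} {σ : Equiv.Perm (Fin (n+1))} (h : σ ∈ Ag π a)
    {c : Fin (n+1)} (hc : π a c) : π a (σ c) := by
  by_contra hh
  have := mem_Ag.1 h _ hh
  rw [σ.injective this] at hh
  exact hh hc

def sg (σ : Equiv.Perm (Fin (n+1))) : Kv := ((Equiv.Perm.sign σ : ℤ) : Kv)

lemma sg_mul_swap (σ : Equiv.Perm (Fin (n+1))) (p q : Fin (n+1)) (h : p ≠ q) : sg (σ * Equiv.swap p q) = - sg σ := by
  simp [sg, Equiv.Perm.sign_mul, Equiv.Perm.sign_swap h]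

def RL (x : MM n) : Prop := ∀ π a τ, ∑ σ ∈ Ag π a, sg σ * x (π, σ * τ) = ∑ σ ∈ Ag π a, sg σ * x (spl π a, σ * τ)

lemma swap_mul_sw (τ : Equiv.Perm (Fin (n+1))) (i : Fin n) :
    Equiv.swap (τ i.castSucc) (τ i.succ) * τ = τ * sw i := by
  rw [sw, Equiv.mul_swap_eq_swap_mul]

lemma al_nr {π : Setoid (Fin (n+1))} {a b} (h : ¬ π a b) : al π a b = 1 := by simp [al, h]
lemma bt_nr {π : Setoid (Fin (n+1))} {a b} (h : ¬ π a b) : bt π a b = 0 := by simp [bt, h]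

lemma btal (π : Setoid (Fin (n+1))) {p q : Fin (n+1)} (h : p ≠ q) : bt π p q - al π q p = -1 := by
  by_cases h1 : π p q
  · have h2 := π.symm h1
    rcases lt_or_gt_of_ne h with h3 | h3
    · simp [bt, al, h1, lt_asymm h3]
    · simp [bt, al, h1, h2, h3]
  · have h2 : ¬ π q p := fun h => h1 (π.symm h)
    rw [bt_nr h1, al_nr h2]; ring

lemma albt_eq {π π' : Setoid (Fin (n+1))} {a b c d : Fin (n+1)} (h : π a b ↔ π' c d) (h' : π a b → a = c ∧ b = d) :
    al π a b = al π' c d ∧ bt π a b = bt π' c d := by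
  by_cases hh : π a b
  · obtain ⟨rfl, rfl⟩ := h' hh
    have h2 := h.1 hh
    simp [al, bt, hh, h2]
  · have h2 : ¬ π' c d := fun h3 => hh (h.2 h3)
    simp [al, bt, hh, h2]

lemma RL_case1 (x : MM n) (π ρ : Setoid (Fin (n+1))) (a : Fin (n+1)) (τ) (i : Fin n)
    (h1 : π a (τ i.castSucc)) (h2 : π a (τ i.succ)) :
    ∑ σ ∈ Ag π a, sg σ * opG n i x (ρ, σ * τ) = - ∑ σ ∈ Ag π a, sg σ * x (ρ, σ * τ) := by
  have hne : τ i.castSucc ≠ τ i.succ := fun h => sw_ne' i (τ.injective h)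
  simp only [opG_apply, mul_add, Finset.sum_add_distrib]
  have e1 : ∑ σ ∈ Ag π a, sg σ * (al ρ ((σ * τ) i.castSucc) ((σ * τ) i.succ) * x (ρ, σ * τ * sw i))
     = ∑ σ ∈ Ag π a, - sg σ * (al ρ ((σ * τ) i.succ) ((σ * τ) i.castSucc) * x (ρ, σ * τ)) := by
    have hinv : ∀ σ ∈ Ag π a, σ * Equiv.swap (τ i.castSucc) (τ i.succ) ∈ Ag π a := by
      intro σ hσ
      rw [mem_Ag]
      intro c hc
      rw [Equiv.Perm.mul_apply, Equiv.swap_apply_of_ne_of_ne, mem_Ag.1 hσ c hc]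
      · rintro rfl; exact hc h1
      · rintro rfl; exact hc h2
    refine Finset.sum_bij' (fun σ _ => σ * Equiv.swap (τ i.castSucc) (τ i.succ))
      (fun σ _ => σ * Equiv.swap (τ i.castSucc) (τ i.succ)) hinv hinv ?_ ?_ ?_
    · intro σ _; simp [mul_assoc]
    · intro σ _; simp [mul_assoc]
    · intro σ _
      have e : σ * Equiv.swap (τ i.castSucc) (τ i.succ) * τ = σ * τ * sw i := by
        rw [mul_assoc, swap_mul_sw, ← mul_assoc]
      simp only [e]
      rw [sg_mul_swap _ _ _ hne, swl, swr, neg_neg]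
  rw [e1, ← Finset.sum_add_distrib, ← Finset.sum_neg_distrib]
  refine Finset.sum_congr rfl fun σ _ => ?_
  have := btal ρ (p := (σ * τ) i.castSucc) (q := (σ * τ) i.succ) (fun h => sw_ne' i ((σ * τ).injective h))
  linear_combination (sg σ * x (ρ, σ * τ)) * this

lemma RL_case2 (x : MM n) (π ρ : Setoid (Fin (n+1))) (a : Fin (n+1)) (τ) (i : Fin n) (A B : Kv)
    (h1 : ∀ σ ∈ Ag π a, al ρ ((σ * τ) i.castSucc) ((σ * τ) i.succ) = A)
    (h2 : ∀ σ ∈ Ag π a, bt ρ ((σ * τ) i.castSucc) ((σ * τ) i.succ) = B) :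
    ∑ σ ∈ Ag π a, sg σ * opG n i x (ρ, σ * τ) = A * ∑ σ ∈ Ag π a, sg σ * x (ρ, σ * (τ * sw i)) +
     B * ∑ σ ∈ Ag π a, sg σ * x (ρ, σ * τ) := by
  rw [Finset.mul_sum, Finset.mul_sum, ← Finset.sum_add_distrib]
  refine Finset.sum_congr rfl fun σ hσ => ?_
  rw [opG_apply, h1 σ hσ, h2 σ hσ, mul_assoc σ]
  ring

lemma RL_opG (x : MM n) (hx : RL x) (i : Fin n) : RL (opG n i x) := by
  intro π a τ
  by_cases h : π a (τ i.castSucc) ∧ π a (τ i.succ)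
  · rw [RL_case1 x π π a τ i h.1 h.2, RL_case1 x π (spl π a) a τ i h.1 h.2, hx]
  · have hne : τ i.castSucc ≠ τ i.succ := fun h => sw_ne' i (τ.injective h)
    have key : ∀ σ ∈ Ag π a,
        (π ((σ * τ) i.castSucc) ((σ * τ) i.succ) → (σ * τ) i.castSucc = τ i.castSucc ∧ (σ * τ) i.succ = τ i.succ) ∧
        (π ((σ * τ) i.castSucc) ((σ * τ) i.succ) ↔ π (τ i.castSucc) (τ i.succ)) ∧
        (spl π a ((σ * τ) i.castSucc) ((σ * τ) i.succ) ↔ π (τ i.castSucc) (τ i.succ)) := by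
      intro σ hσ
      have hne' : (σ * τ) i.castSucc ≠ (σ * τ) i.succ := fun h => sw_ne' i ((σ * τ).injective h)
      rw [spl_rel]
      simp only [hne', false_or]
      simp only [Equiv.Perm.mul_apply]
      by_cases hp : π a (τ i.castSucc)
      · have hq : ¬ π a (τ i.succ) := fun hq => h ⟨hp, hq⟩
        rw [mem_Ag.1 hσ _ hq]
        have hp' := Ag_class hσ hp
        have n1 : ¬ π (σ (τ i.castSucc)) (τ i.succ) := fun hh => hq (π.trans hp' hh)
        have n2 : ¬ π ((τ i.castSucc)) (τ i.succ) := fun hh => hq (π.trans hp hh)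
        simp [n1, n2]
      · rw [mem_Ag.1 hσ _ hp]
        by_cases hq : π a (τ i.succ)
        · have hq' := Ag_class hσ hq
          have n1 : ¬ π (τ i.castSucc) (σ (τ i.succ)) := fun hh => hp (π.trans hq' (π.symm hh))
          have n2 : ¬ π ((τ i.castSucc)) (τ i.succ) := fun hh => hp (π.trans hq (π.symm hh))
          simp [n1, n2]
        · rw [mem_Ag.1 hσ _ hq]; simp [hp]
    rw [RL_case2 x π π a τ i (al π (τ i.castSucc) (τ i.succ)) (bt π (τ i.castSucc) (τ i.succ)),
      RL_case2 x π (spl π a) a τ i (al π (τ i.castSucc) (τ i.succ)) (bt π (τ i.castSucc) (τ i.succ)), hx, hx]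
    all_goals
      intro σ hσ
      obtain ⟨k1, k2, k3⟩ := key σ hσ
      first
      | exact (albt_eq k2 k1).1
      | exact (albt_eq k2 k1).2
      | exact (albt_eq k3 (fun hh => k1 (k2.2 (k3.1 hh)))).1
      | exact (albt_eq k3 (fun hh => k1 (k2.2 (k3.1 hh)))).2

lemma VV_RL {x : MM n} (hx : x ∈ VV n) : RL x := by
  let W : Submodule Kv (MM n) :=
    { carrier := {x | RL x}
      zero_mem' := by intro π a τ; simp
      add_mem' := by
        intro x y hx hy π a τ
        simp only [Pi.add_apply, mul_add, Finset.sum_add_distrib]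
        rw [hx, hy]
      smul_mem' := by
        intro c x hx π a τ
        simp only [Pi.smul_apply, smul_eq_mul, mul_left_comm _ c]
        rw [← Finset.mul_sum, ← Finset.mul_sum, hx] }
  obtain ⟨z, hz, rfl⟩ := mem_VV.1 hx
  have : ∀ y ∈ W, z y ∈ W := by
    clear hx
    induction hz using Algebra.adjoin_induction with
    | mem z hz => obtain ⟨i, rfl⟩ := hz; exact fun y hy => RL_opG y hy i
    | algebraMap r => exact fun y hy => W.smul_mem r hy
    | add z w _ _ h1 h2 => exact fun y hy => W.add_mem (h1 y hy) (h2 y hy)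
    | mul z w _ _ h1 h2 => exact fun y hy => h1 _ (h2 y hy)
  exact this _ (fun π a τ => rfl)

/-- the class of `a` is nontrivial and decreasing -/
def dec (π : Setoid (Fin (n+1))) (τ : Equiv.Perm (Fin (n+1))) (a : Fin (n+1)) : Prop :=
  (∃ b, π a b ∧ b ≠ a) ∧ ∀ b c, π a b → π a c → b < c → τ.symm c < τ.symm b

def Gd (n : ℕ) : Set (Setoid (Fin (n+1)) × Equiv.Perm (Fin (n+1))) := {p | ∀ a, ¬ dec p.1 p.2 a}

lemma spl_lt {π : Setoid (Fin (n+1))} {a : Fin (n+1)} (h : ∃ b, π a b ∧ b ≠ a) : spl π a < π := by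
  obtain ⟨b, hb, hne⟩ := h
  refine lt_of_le_of_ne ?_ ?_
  · intro c d h
    rcases h with rfl | h
    · exact π.refl _
    · exact h.1
  · intro h
    have : spl π a a b := by rw [h]; exact hb
    rcases this with h' | h'
    · exact hne h'.symm
    · exact h'.2 (π.refl _)

lemma dec_congr {π : Setoid (Fin (n+1))} {τ a b} (h : π a b) : dec π τ a → dec π τ b := by
  rintro ⟨⟨c, hc, hne⟩, h2⟩
  refine ⟨?_, fun d e hd he => h2 d e (π.trans h hd) (π.trans h he)⟩
  by_cases hb : b = a
  · subst hb; exact ⟨c, hc, hne⟩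
  · exact ⟨a, π.symm h, fun h => hb h.symm⟩

lemma dec_mul {π : Setoid (Fin (n+1))} {τ a b} {σ : Equiv.Perm (Fin (n+1))} (hσ : σ ∈ Ag π a) (h : ¬ π a b)
    (hd : dec π (σ * τ) b) : dec π τ b := by
  refine ⟨hd.1, fun c d hc hd' hlt => ?_⟩
  have := hd.2 c d hc hd' hlt
  have e : ∀ c, π b c → (σ * τ).symm c = τ.symm c := by
    intro c hc
    rw [Equiv.symm_apply_eq, Equiv.Perm.mul_apply, Equiv.apply_symm_apply]
    exact (mem_Ag.1 hσ c (fun hh => h (π.trans hh (π.symm hc)))).symm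
  rwa [e c hc, e d hd'] at this

lemma dec_unique {π : Setoid (Fin (n+1))} {τ a} {σ : Equiv.Perm (Fin (n+1))} (hσ : σ ∈ Ag π a)
    (hd : dec π (σ * τ) a) (hd' : dec π τ a) : σ = 1 := by
  -- σ preserves the order on the class
  have hmono : ∀ b c, π a b → π a c → b < c → σ b < σ c := by
    intro b c hb hc hlt
    by_contra hh
    have hne : σ c < σ b := lt_of_le_of_ne (not_lt.1 hh) (fun h => hlt.ne' (σ.injective h))
    have h1 := hd.2 _ _ (Ag_class hσ hc) (Ag_class hσ hb) hne
    have e : ∀ c, (σ * τ).symm (σ c) = τ.symm c := by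
      intro c; rw [Equiv.symm_apply_eq, Equiv.Perm.mul_apply, Equiv.apply_symm_apply]
    rw [e, e] at h1
    exact absurd (hd'.2 b c hb hc hlt) (not_lt.2 h1.le)
  have key : ∀ m : ℕ, ∀ b : Fin (n+1), (b:ℕ) = m → π a b → σ b = b := by
    intro m
    induction m using Nat.strong_induction_on with
    | _ m ih =>
      rintro b rfl hb
      rcases lt_trichotomy (σ b) b with h | h | h
      · have := ih _ h (σ b) rfl (Ag_class hσ hb)
        exact absurd (σ.injective this) h.ne
      · exact h
      · obtain ⟨c, rfl⟩ : ∃ c, σ c = b := σ.surjective b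
        have hc : π a c := by
          by_contra hc
          have := mem_Ag.1 hσ c hc
          rw [this] at hb; exact hc hb
        rcases lt_trichotomy c (σ c) with h3 | h3 | h3
        · have := ih _ h3 c rfl hc
          rw [this] at h3; exact absurd h3 (lt_irrefl _)
        · rw [← h3]; exact h3.symm
        · have := hmono _ _ hb hc h3
          exact absurd h (not_lt.2 this.le)
  ext c
  by_cases hc : π a c
  · rw [key _ c rfl hc]; rfl
  · rw [mem_Ag.1 hσ c hc]; rfl

lemma RL_zero (x : MM n) (hx : RL x) (h0 : ∀ p ∈ Gd n, x p = 0) : x = 0 := by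
  classical
  suffices h : ∀ π, ∀ m : ℕ, ∀ τ, (Finset.univ.filter fun a => dec π τ a).card = m → x (π, τ) = 0 by
    ext ⟨π, τ⟩; exact h π _ τ rfl
  intro π
  induction π using WellFoundedLT.induction with
  | ind π ihπ =>
    intro m
    induction m using Nat.strong_induction_on with
    | _ m ih =>
      rintro τ rfl
      by_cases hg : (π, τ) ∈ Gd n
      · exact h0 _ hg
      simp only [Gd, Set.mem_setOf_eq, not_forall, not_not] at hg
      obtain ⟨a, ha⟩ := hg
      have hr := hx π a τ
      rw [Finset.sum_eq_zero (s := Ag π a) (f := fun σ => sg σ * x (spl π a, σ * τ))] at hr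
      · rw [Finset.sum_eq_single 1] at hr
        · simpa [sg] using hr
        · intro σ hσ hne
          rw [ih _ _ (σ * τ) rfl, mul_zero]
          apply Finset.card_lt_card
          rw [Finset.ssubset_iff_of_subset]
          · refine ⟨a, by simpa using ha, ?_⟩
            simp only [Finset.mem_filter, Finset.mem_univ, true_and]
            exact fun hd => hne (dec_unique hσ hd ha)
          · intro b hb
            simp only [Finset.mem_filter, Finset.mem_univ, true_and] at hb ⊢
            by_cases hab : π a b
            · exact dec_congr hab ha
            · exact dec_mul hσ hab hb
        · intro h; exact absurd (mem_Ag.2 (fun c _ => rfl)) h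
      · intro σ _
        rw [ihπ _ (spl_lt ha.1) _ _ rfl, mul_zero]

lemma VV_le : Module.finrank Kv (VV n) ≤ Nat.card (Gd n) := by
  classical
  haveI := Fintype.ofFinite (Gd n)
  let r : VV n →ₗ[Kv] (Gd n → Kv) := (LinearMap.funLeft Kv Kv (Subtype.val : Gd n → _)).comp (VV n).subtype
  have hr : Function.Injective r := by
    rw [injective_iff_map_eq_zero]
    intro x hx
    apply Subtype.ext
    exact RL_zero x (VV_RL x.2) (fun p hp => congrFun hx ⟨p, hp⟩)
  have := LinearMap.finrank_le_finrank_of_injective hr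
  rwa [Module.finrank_fintype_fun_eq_card, ← Nat.card_eq_fintype_card] at this
end upper


section oprod
variable {R : Type*} [Ring R]

/-- ordered product -/
def opr (f : ℕ → R) (S : Finset ℕ) : ℕ → R
  | 0 => 1
  | (m+1) => opr f S m * (if m ∈ S then f m else 1)

/-- ordered product of the indices `≥ k` -/
def oprr (f : ℕ → R) (S : Finset ℕ) (k : ℕ) : ℕ → R
  | 0 => 1
  | (m+1) => oprr f S k m * (if m ∈ S ∧ k ≤ m then f m else 1)

lemma oprr_one (f : ℕ → R) (S : Finset ℕ) (k m : ℕ) (h : m ≤ k) : oprr f S k m = 1 := by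
  induction m with
  | zero => rfl
  | succ m ih => rw [oprr, ih (by omega), if_neg (by omega), one_mul]

lemma opr_split (f : ℕ → R) (S : Finset ℕ) (k d : ℕ) : opr f S (k+d) = opr f S k * oprr f S k (k+d) := by
  induction d with
  | zero => simp [oprr_one]
  | succ d ih => rw [← add_assoc, opr, oprr, ih, mul_assoc]; simp

lemma opr_congr (f : ℕ → R) (S S' : Finset ℕ) (m : ℕ) (h : ∀ i < m, i ∈ S ↔ i ∈ S') : opr f S m = opr f S' m := by
  induction m with
  | zero => rfl
  | succ m ih => rw [opr, opr, ih (fun i hi => h i (by omega)), if_congr (h m (by omega)) rfl rfl]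

lemma oprr_congr (f : ℕ → R) (S S' : Finset ℕ) (k m : ℕ) (h : ∀ i, k ≤ i → i < m → (i ∈ S ↔ i ∈ S')) :
    oprr f S k m = oprr f S' k m := by
  induction m with
  | zero => rfl
  | succ m ih =>
    rw [oprr, oprr, ih (fun i hi h' => h i hi (by omega))]
    by_cases hk : k ≤ m
    · rw [if_congr (and_congr_left' (h m hk (by omega))) rfl rfl]
    · rw [if_neg (by tauto), if_neg (by tauto)]

lemma opr_comm (f : ℕ → R) (S : Finset ℕ) (m : ℕ) (z : R) (h : ∀ i < m, i ∈ S → f i * z = z * f i) :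
    opr f S m * z = z * opr f S m := by
  induction m with
  | zero => simp [opr]
  | succ m ih =>
    have ih := ih (fun i hi => h i (by omega))
    rw [opr]
    split_ifs with hm
    · rw [mul_assoc, h m (by omega) hm, ← mul_assoc, ih, mul_assoc]
    · simpa using ih

lemma oprr_comm (f : ℕ → R) (S : Finset ℕ) (k m : ℕ) (z : R) (h : ∀ i < m, k ≤ i → i ∈ S → f i * z = z * f i) :
    oprr f S k m * z = z * oprr f S k m := by
  induction m with
  | zero => simp [oprr]
  | succ m ih =>
    have ih := ih (fun i hi => h i (by omega))
    rw [oprr]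
    split_ifs with hm
    · rw [mul_assoc, h m (by omega) hm.2 hm.1, ← mul_assoc, ih, mul_assoc]
    · simpa using ih

lemma opr_mem (f : ℕ → R) (S : Finset ℕ) (C : Subring R) (m : ℕ) (h : ∀ i < m, i ∈ S → f i ∈ C) : opr f S m ∈ C := by
  induction m with
  | zero => exact one_mem _
  | succ m ih =>
    rw [opr]
    split_ifs with hm
    · exact mul_mem (ih fun i hi => h i (by omega)) (h m (by omega) hm)
    · rw [mul_one]; exact ih fun i hi => h i (by omega)

variable [Algebra Kv R]

lemma kv_m1 : (vv^2 - 1 : Kv) ≠ 0 := by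
  have : (vv^2 - 1 : Kv) = algebraMap (Polynomial ℂ) Kv (Polynomial.X^2 - Polynomial.C 1) := by
    simp [vv, RatFunc.algebraMap_X]
  rw [this]
  intro h
  rw [← map_zero (algebraMap (Polynomial ℂ) Kv)] at h
  exact Polynomial.X_pow_sub_C_ne_zero (by norm_num) (1:ℂ) (RatFunc.algebraMap_injective ℂ h)

lemma kv_p1 : (vv^2 + 1 : Kv) ≠ 0 := by
  have : (vv^2 + 1 : Kv) = algebraMap (Polynomial ℂ) Kv (Polynomial.X^2 + Polynomial.C 1) := by
    simp [vv, RatFunc.algebraMap_X]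
  rw [this]
  intro h
  rw [← map_zero (algebraMap (Polynomial ℂ) Kv)] at h
  exact Polynomial.X_pow_add_C_ne_zero (by norm_num) (1:ℂ) (RatFunc.algebraMap_injective ℂ h)

/-- Hecke-type relations for `y` on an index set `J` -/
structure HY (J : Finset ℕ) (y : ℕ → R) (I : Submodule Kv R) : Prop where
  sq : ∀ j ∈ J, y j * y j = (vv^2 + 1) • y j
  br : ∀ j, j ∈ J → j + 1 ∈ J → y j * y (j+1) * y j - vv^2 • y j = y (j+1) * y j * y (j+1) - vv^2 • y (j+1)
  far : ∀ i j, i ∈ J → j ∈ J → i + 2 ≤ j → y i * y j = y j * y i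
  left : ∀ j ∈ J, ∀ z ∈ I, y j * z ∈ I
  right : ∀ j ∈ J, ∀ z ∈ I, z * y j ∈ I

lemma smul_cancel_mem {I : Submodule Kv R} {c : Kv} (hc : c ≠ 0) {x : R} (h : c • x ∈ I) : x ∈ I := by
  have := I.smul_mem c⁻¹ h
  rwa [smul_smul, inv_mul_cancel₀ hc, one_smul] at this

/-- common core: `A y z B` in `I` implies the difference is -/
lemma diff_mem {I : Submodule Kv R} {A B y z : R} 
    (hbr : y * z * y - vv^2 • y = z * y * z - vv^2 • z)
    (h1 : A * (y * z * y) * B ∈ I) (h2 : A * (z * y * z) * B ∈ I) : A * y * B - A * z * B ∈ I := by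
  apply smul_cancel_mem (c := vv^2) (pow_ne_zero 2 kv_q)
  have e : vv^2 • (A * y * B - A * z * B) = A * (y * z * y) * B - A * (z * y * z) * B := by
    have : y * z * y - z * y * z = vv^2 • y - vv^2 • z := by
      rw [sub_eq_sub_iff_add_eq_add] at hbr ⊢
      rw [hbr, add_comm]
    rw [← sub_mul, ← mul_sub, ← sub_mul, ← mul_sub, this]
    simp only [mul_sub, sub_mul, smul_sub, mul_smul_comm, smul_mul_assoc]
  rw [e]; exact I.sub_mem h1 h2

lemma top_rem {J : Finset ℕ} {y : ℕ → R} {I : Submodule Kv R} (H : HY J y I) {j : ℕ} (hj : j ∈ J) (hj1 : j + 1 ∈ J)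
    {A B : R} (hA : A * y (j+1) = y (j+1) * A) (hB : B * y j = y j * B) (hB' : B * y (j+1) = y (j+1) * B)
    (h : A * (y j * y (j+1)) * B ∈ I) : A * y j * B ∈ I := by
  have h1 : A * (y j * y (j+1) * y j) * B ∈ I := by
    have := H.right j hj _ h
    rwa [mul_assoc _ B, hB, ← mul_assoc, mul_assoc A _ (y j)] at this
  have h2 : A * (y (j+1) * y j * y (j+1)) * B ∈ I := by
    have := H.left (j+1) hj1 _ h
    rwa [← mul_assoc, ← mul_assoc, ← hA, mul_assoc A, ← mul_assoc (y (j+1))] at this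
  have h3 := diff_mem (H.br j hj hj1) h1 h2
  have h4 := H.right (j+1) hj1 _ h3
  have h5 : A * y (j+1) * B ∈ I := by
    apply smul_cancel_mem kv_p1
    have := I.sub_mem h h4
    have e : A * (y j * y (j+1)) * B - (A * y j * B - A * y (j+1) * B) * y (j+1) = (vv^2+1) • (A * y (j+1) * B) := by
      rw [sub_mul, mul_assoc _ B, hB', mul_assoc _ B, hB', ← mul_assoc _ _ B, ← mul_assoc _ _ B, mul_assoc A, mul_assoc A (y (j+1)), H.sq _ hj1]
      simp [mul_assoc]
    rwa [e] at this
  have := I.add_mem h3 h5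
  rwa [sub_add_cancel] at this

lemma bot_rem {J : Finset ℕ} {y : ℕ → R} {I : Submodule Kv R} (H : HY J y I) {j : ℕ} (hj : j ∈ J) (hj1 : j + 1 ∈ J)
    {A B : R} (hA : A * y (j+1) = y (j+1) * A) (hA' : A * y j = y j * A) (hB : B * y j = y j * B)
    (h : A * (y j * y (j+1)) * B ∈ I) : A * y (j+1) * B ∈ I := by
  have h1 : A * (y j * y (j+1) * y j) * B ∈ I := by
    have := H.right j hj _ h
    rwa [mul_assoc _ B, hB, ← mul_assoc, mul_assoc A _ (y j)] at this
  have h2 : A * (y (j+1) * y j * y (j+1)) * B ∈ I := by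
    have := H.left (j+1) hj1 _ h
    rwa [← mul_assoc, ← mul_assoc, ← hA, mul_assoc A, ← mul_assoc (y (j+1))] at this
  have h3 := diff_mem (H.br j hj hj1) h1 h2
  have h4 := H.left j hj _ h3
  have h5 : A * y j * B ∈ I := by
    apply smul_cancel_mem kv_p1
    have := I.add_mem h4 h
    have e : y j * (A * y j * B - A * y (j+1) * B) + A * (y j * y (j+1)) * B = (vv^2+1) • (A * y j * B) := by
      rw [mul_sub, ← mul_assoc, ← mul_assoc, ← hA', mul_assoc A, H.sq _ hj, ← mul_assoc, ← mul_assoc, ← hA', mul_assoc A (y j)]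
      simp
    rwa [e] at this
  have := I.sub_mem h5 h3
  rwa [sub_sub_cancel] at this

lemma opr_two (y : ℕ → R) (S : Finset ℕ) (n j : ℕ) (hn : j + 1 < n) : opr y S n =
    opr y S j * ((if j ∈ S then y j else 1) * (if j + 1 ∈ S then y (j+1) else 1)) * oprr y S (j+2) n := by
  obtain ⟨d, rfl⟩ : ∃ d, n = j + 2 + d := ⟨n - j - 2, by omega⟩
  rw [opr_split y S (j+2) d, opr, opr]
  simp only [mul_assoc]

lemma rem_top {J S : Finset ℕ} {y : ℕ → R} {I : Submodule Kv R} (H : HY J y I) {j n : ℕ} (hS : S ⊆ J) (hn : j + 1 < n)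
    (h1 : j ∈ S) (h2 : j + 1 ∈ S) (h3 : j + 2 ∉ S) (h : opr y S n ∈ I) : opr y (S.erase (j+1)) n ∈ I := by
  rw [opr_two y _ n j hn] at h ⊢
  rw [if_pos h1, if_pos h2] at h
  rw [if_pos (by simp [h1]), if_neg (by simp), mul_one,
    opr_congr y (S.erase (j+1)) S j (fun i hi => by simp; omega),
    oprr_congr y (S.erase (j+1)) S (j+2) n (fun i hi hi' => by simp; omega)]
  refine top_rem H (hS h1) (hS h2) (opr_comm _ _ _ _ fun i hi hiS => H.far _ _ (hS hiS) (hS h2) (by omega))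
    (oprr_comm _ _ _ _ _ fun i hi hk hiS => (H.far _ _ (hS h1) (hS hiS) (by omega)).symm)
    (oprr_comm _ _ _ _ _ fun i hi hk hiS => (H.far _ _ (hS h2) (hS hiS) ?_).symm) h
  by_contra hc
  obtain rfl : i = j + 2 := by omega
  exact h3 hiS

lemma rem_bot {J S : Finset ℕ} {y : ℕ → R} {I : Submodule Kv R} (H : HY J y I) {j n : ℕ} (hS : S ⊆ J) (hn : j + 1 < n)
    (h1 : j ∈ S) (h2 : j + 1 ∈ S) (h3 : ∀ i ∈ S, i + 1 ≠ j) (h : opr y S n ∈ I) : opr y (S.erase j) n ∈ I := by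
  rw [opr_two y _ n j hn] at h ⊢
  rw [if_pos h1, if_pos h2] at h
  rw [if_neg (by simp), if_pos (by simp [h2]), one_mul,
    opr_congr y (S.erase j) S j (fun i hi => by simp; omega),
    oprr_congr y (S.erase j) S (j+2) n (fun i hi hi' => by simp; omega)]
  refine bot_rem H (hS h1) (hS h2) (opr_comm _ _ _ _ fun i hi hiS => H.far _ _ (hS hiS) (hS h2) (by omega))
    (opr_comm _ _ _ _ fun i hi hiS => H.far _ _ (hS hiS) (hS h1) ?_)
    (oprr_comm _ _ _ _ _ fun i hi hk hiS => (H.far _ _ (hS h1) (hS hiS) (by omega)).symm) h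
  have := h3 i hiS
  omega

/-- reduce to one chosen element in each component -/
lemma reduce {J : Finset ℕ} {y : ℕ → R} {I : Submodule Kv R} (H : HY J y I) (n : ℕ) (hJ : ∀ j ∈ J, j < n)
    (c : ℕ → ℕ) (hc : ∀ j, j ∈ J → j + 1 ∈ J → c j = c (j+1)) :
    ∀ (m : ℕ) (S : Finset ℕ), S.card = m → S ⊆ J → J.filter (fun j => c j = j) ⊆ S →
     (∀ j ∈ S, ∀ k, (j ≤ k ∧ k ≤ c j) ∨ (c j ≤ k ∧ k ≤ j) → k ∈ S ∧ c k = c j) → opr y S n ∈ I →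
      opr y (J.filter (fun j => c j = j)) n ∈ I := by
  intro m
  induction m with
  | zero =>
    intro S hS hSJ hT _ h
    rw [Finset.card_eq_zero] at hS
    subst hS
    rwa [Finset.subset_empty.1 hT]
  | succ m ih =>
    intro S hS hSJ hT hinv h
    by_cases hall : ∀ j ∈ S, c j = j
    · have : J.filter (fun j => c j = j) = S := by
        refine Finset.Subset.antisymm hT fun j hj => ?_
        exact Finset.mem_filter.2 ⟨hSJ hj, hall j hj⟩
      rwa [this]
    push Not at hall
    have hne : (S.filter fun j => c j ≠ j).Nonempty := by
      obtain ⟨j, hj, hj'⟩ := hall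
      exact ⟨j, Finset.mem_filter.2 ⟨hj, hj'⟩⟩
    obtain ⟨j, hj, hmax⟩ := Finset.exists_max_image _ (fun j => (j - c j) + (c j - j)) hne
    rw [Finset.mem_filter] at hj
    obtain ⟨hjS, hcj⟩ := hj
    have hmax' : ∀ k ∈ S, (k - c k) + (c k - k) ≤ (j - c j) + (c j - j) := by
      intro k hk
      by_cases hck : c k = k
      · omega
      · exact hmax k (Finset.mem_filter.2 ⟨hk, hck⟩)
    refine ih (S.erase j) (by rw [Finset.card_erase_of_mem hjS]; omega) ((Finset.erase_subset _ _).trans hSJ) ?_ ?_ ?_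
    · intro k hk
      rw [Finset.mem_erase]
      refine ⟨?_, hT hk⟩
      rintro rfl
      exact hcj (Finset.mem_filter.1 hk).2
    · intro k hk l hl
      rw [Finset.mem_erase] at hk ⊢
      have h1 := hinv k hk.2 l hl
      refine ⟨⟨?_, h1.1⟩, h1.2⟩
      rintro rfl
      have := hmax' k hk.2
      have := h1.2
      have := hk.1
      omega
    · rcases lt_or_gt_of_ne hcj with hlt | hlt
      · obtain ⟨j, rfl⟩ : ∃ i, j = i + 1 := ⟨j - 1, by omega⟩
        have hp := hinv _ hjS j (by omega)
        refine rem_top H hSJ (hJ _ (hSJ hjS)) hp.1 hjS ?_ h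
        intro h2
        have e1 := hc _ (hSJ hjS) (hSJ h2)
        have := hmax' _ h2
        rw [show j + 1 + 1 = j + 2 from rfl] at e1
        omega
      · have hp := hinv _ hjS (j+1) (by omega)
        refine rem_bot H hSJ (hJ _ (hSJ hp.1)) hjS hp.1 ?_ h
        rintro i hi rfl
        have e1 := hc _ (hSJ hi) (hSJ hjS)
        have := hmax' _ hi
        omega
end oprod


section epsn
variable {n : ℕ}

/-- generators as elements -/
def gB (n j : ℕ) : BT n := (gU n j : BT n)
def hB (n j : ℕ) : BT n := 1 + gB n j

lemma gB_val (j : ℕ) (h : j < n) : gB n j = bg n ⟨j, h⟩ := gU_val n j h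

lemma gB_far (i j : ℕ) (h : i + 2 ≤ j) (hj : j < n) : gB n i * gB n j = gB n j * gB n i := by
  have := congrArg Units.val ((btd n).gg i j h hj)
  simpa [gB] using this
lemma gB_br (i : ℕ) (h : i + 1 < n) : gB n i * gB n (i+1) * gB n i = gB n (i+1) * gB n i * gB n (i+1) := by
  have := congrArg Units.val ((btd n).br i h)
  simpa [gB] using this

lemma gB_quad (i : ℕ) (h : i < n) : gB n i * gB n i = 1 + (vv^2-1 : Kv) • (eU n i * hB n i) := (btd n).quad i h

lemma eB_comm (i j : ℕ) (hi : i < n) (hj : j < n) : eU n i * eU n j = eU n j * eU n i := (btd n).ee i j hi hj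

lemma eeg_comm (i j : ℕ) (hi : i < n) (hj : j < n) : eU n j * eU n i * gB n i = gB n i * (eU n j * eU n i) := by
  by_cases h : i = j
  · subst h
    rw [(btd n).idem i hi]
    exact (btd n).egs i hi
  · by_cases h2 : i + 2 ≤ j ∨ j + 2 ≤ i
    · have h3 : eU n j * gB n i = gB n i * eU n j := by
        rcases h2 with h2 | h2
        · exact (btd n).eg2 i j h2 hj
        · exact (btd n).eg1 j i h2 hi
      have h4 : eU n i * gB n i = gB n i * eU n i := (btd n).egs i hi
      rw [mul_assoc, h4, ← mul_assoc, h3, mul_assoc]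
    · rw [gB_val i hi, eU_val n i hi, eU_val n j hj]
      have hd : Nat.dist ((⟨j, hj⟩ : Fin n) : ℕ) ((⟨i, hi⟩ : Fin n) : ℕ) = 1 := by
        simp [Nat.dist]; omega
      have h5 := (bt_rel (BTRel.eeg₁ (n := n) ⟨j, hj⟩ ⟨i, hi⟩ hd)).trans (bt_rel (BTRel.eeg₂ (n := n) ⟨j, hj⟩ ⟨i, hi⟩ hd))
      simpa [bg, be, mul_assoc] using h5

lemma eps_eg (S : Finset ℕ) (m j : ℕ) (hm : m ≤ n) (hj : j < n) :
    opr (eU n) S m * eU n j * gB n j = gB n j * (opr (eU n) S m * eU n j) := by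
  induction m with
  | zero => simpa [opr, gB] using (btd n).egs j hj
  | succ m ih =>
    have ih := ih (by omega)
    rw [opr]
    split_ifs
    · have h1 := eeg_comm j m hj (by omega)
      have h2 := eB_comm m j (by omega) hj
      have h3 : eU n j * gB n j = gB n j * eU n j := (btd n).egs j hj
      calc opr (eU n) S m * eU n m * eU n j * gB n j = opr (eU n) S m * (eU n m * eU n j * gB n j) := by
            simp only [mul_assoc]
        _ = opr (eU n) S m * (gB n j * eU n j) * eU n m := by rw [h1, h2]; simp only [mul_assoc]
        _ = (opr (eU n) S m * eU n j * gB n j) * eU n m := by rw [← h3]; simp only [mul_assoc]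
        _ = gB n j * (opr (eU n) S m * (eU n j * eU n m)) := by rw [ih]; simp only [mul_assoc]
        _ = gB n j * (opr (eU n) S m * eU n m * eU n j) := by rw [← h2]; simp only [mul_assoc]
    · simpa using ih

lemma eps_abs (S : Finset ℕ) (m j : ℕ) (hm : m ≤ n) (hj : j < m) (hS : j ∈ S) :
    opr (eU n) S m * eU n j = opr (eU n) S m := by
  induction m with
  | zero => omega
  | succ m ih =>
    rw [opr]
    by_cases h : j = m
    · subst h
      rw [if_pos hS, mul_assoc, (btd n).idem j (by omega)]
    · have ih := ih (by omega) (by omega)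
      split_ifs
      · rw [mul_assoc, eB_comm m j (by omega) (by omega), ← mul_assoc, ih]
      · simpa using ih

lemma eps_g (S : Finset ℕ) (m j : ℕ) (hm : m ≤ n) (hj : j < m) (hS : j ∈ S) :
    opr (eU n) S m * gB n j = gB n j * opr (eU n) S m := by
  have := eps_eg S m j hm (by omega)
  rwa [eps_abs S m j hm hj hS] at this

lemma eps_h (S : Finset ℕ) (m j : ℕ) (hm : m ≤ n) (hj : j < m) (hS : j ∈ S) :
    opr (eU n) S m * hB n j = hB n j * opr (eU n) S m := by
  rw [hB, mul_add, add_mul, eps_g S m j hm hj hS, mul_one, one_mul]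

lemma eps_idem' (S : Finset ℕ) (k : ℕ) (hk : k ≤ n) (m : ℕ) (hm : m ≤ k) :
    opr (eU n) S k * opr (eU n) S m = opr (eU n) S k := by
  induction m with
  | zero => simp [opr]
  | succ m ih =>
    rw [opr, ← mul_assoc, ih (by omega)]
    split_ifs with h
    · exact eps_abs S k m hk (by omega) h
    · simp

lemma oprP (S : Finset ℕ) (m : ℕ) (hm : m ≤ n) :
    opr (fun j => eU n j * hB n j) S m = opr (eU n) S m * opr (hB n) S m := by
  induction m with
  | zero => simp [opr]
  | succ m ih =>
    have h1 : opr (hB n) S m * opr (eU n) S (m+1) = opr (eU n) S (m+1) * opr (hB n) S m :=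
      opr_comm _ _ _ _ fun i hi hiS => (eps_h S (m+1) i hm (by omega) hiS).symm
    have h2 : opr (hB n) S m * opr (eU n) S m = opr (eU n) S m * opr (hB n) S m :=
      opr_comm _ _ _ _ fun i hi hiS => (eps_h S m i (by omega) (by omega) hiS).symm
    rw [opr, ih (by omega)]
    by_cases h : m ∈ S
    · rw [opr, if_pos h] at h1
      rw [opr, opr, if_pos h, if_pos h, if_pos h, ← h2, ← mul_assoc (opr (eU n) S m * _), ← h1]
      simp only [mul_assoc]
    · rw [opr, opr, if_neg h, if_neg h, if_neg h]; simp

lemma P_mem (j : ℕ) (hj : j < n) : eU n j * hB n j ∈ BTC n := by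
  have hg : gB n j ∈ BTC n := by
    rw [gB_val j hj]; exact Algebra.subset_adjoin ⟨_, rfl⟩
  have h := gB_quad j hj
  have h2 : (vv^2-1 : Kv) • (eU n j * hB n j) ∈ Subalgebra.toSubmodule (BTC n) := by
    have : (vv^2-1 : Kv) • (eU n j * hB n j) = gB n j * gB n j - 1 := by rw [h]; simp
    rw [this]
    exact (BTC n).sub_mem ((BTC n).mul_mem hg hg) (BTC n).one_mem
  exact smul_cancel_mem kv_m1 h2

lemma h_mem (j : ℕ) (hj : j < n) : hB n j ∈ BTC n := by
  rw [hB, gB_val j hj]; exact add_mem (one_mem _) (Algebra.subset_adjoin ⟨_, rfl⟩)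

variable (n) in
/-- target space -/
def II (ep : BT n) : Submodule Kv (BT n) where
  carrier := {z | ep * z = z * ep ∧ ep * z ∈ BTC n}
  zero_mem' := by simp
  add_mem' := by
    rintro a b ⟨h1, h2⟩ ⟨h3, h4⟩
    exact ⟨by rw [mul_add, add_mul, h1, h3], by rw [mul_add]; exact add_mem h2 h4⟩
  smul_mem' := by
    rintro c a ⟨h1, h2⟩
    exact ⟨by rw [mul_smul_comm, smul_mul_assoc, h1], by rw [mul_smul_comm]; exact Subalgebra.smul_mem _ h2 c⟩

lemma mem_II {ep z : BT n} : z ∈ II n ep ↔ ep * z = z * ep ∧ ep * z ∈ BTC n := Iff.rfl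

section fixJ
variable (J : Finset ℕ) (hJ : ∀ j ∈ J, j < n)

lemma hy_h {ep a b : BT n} (hi : ep * ep = ep) (hb : ep * a = a * ep) : ep * a * (ep * b) = ep * (a * b) := by
  rw [hb, mul_assoc a, ← mul_assoc ep, hi, ← mul_assoc, ← hb, mul_assoc]

lemma m1_smul (X : BT n) : (vv^2-1 : Kv) • X = vv^2 • X - X :=
  (sub_smul (vv^2 : Kv) (1 : Kv) X).trans (by rw [one_smul])
lemma p1_smul (X : BT n) : (vv^2+1 : Kv) • X = vv^2 • X + X :=
  (add_smul (vv^2 : Kv) (1 : Kv) X).trans (by rw [one_smul])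

lemma eps_sq (hJ : ∀ j ∈ J, j < n) (j : ℕ) (hj : j ∈ J) : opr (eU n) J n * (gB n j * gB n j) =
    vv^2 • opr (eU n) J n + (vv^2-1 : Kv) • (opr (eU n) J n * gB n j) := by
  rw [gB_quad j (hJ j hj), mul_add, mul_smul_comm, ← mul_assoc, eps_abs J n j le_rfl (hJ j hj) hj, hB]
  simp only [mul_add, mul_one, smul_add, m1_smul]
  abel

lemma HYJ (hJ : ∀ j ∈ J, j < n) : HY J (fun j => opr (eU n) J n * hB n j) (II n (opr (eU n) J n)) := by
  have hi : opr (eU n) J n * opr (eU n) J n = opr (eU n) J n := eps_idem' J n le_rfl n le_rfl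
  have hc : ∀ j ∈ J, opr (eU n) J n * hB n j = hB n j * opr (eU n) J n := fun j hj => eps_h J n j le_rfl (hJ j hj) hj
  have hsq := eps_sq J hJ
  set ep := opr (eU n) J n with hep
  refine ⟨?_, ?_, ?_, ?_, ?_⟩
  · intro j hj
    rw [hy_h hi (hc j hj), hB]
    have := hsq j hj
    simp only [mul_add, add_mul, mul_one, one_mul, smul_add, m1_smul, p1_smul] at this ⊢
    rw [this]; abel
  · intro j hj hj1
    have e1 : ∀ a b, a ∈ J → b ∈ J → ep * hB n a * (ep * hB n b) * (ep * hB n a) = ep * (hB n a * hB n b * hB n a) := by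
      intro a b ha hb
      rw [hy_h hi (hc a ha), hy_h hi]
      rw [← mul_assoc, hc a ha, mul_assoc, hc b hb, mul_assoc]
    rw [e1 _ _ hj hj1, e1 _ _ hj1 hj]
    have h1 := hsq j hj
    have h2 := hsq (j+1) hj1
    have h3 := congrArg (fun x => ep * x) (gB_br (n := n) j (hJ _ hj1))
    simp only [hB]
    simp only [mul_add, add_mul, mul_one, one_mul, smul_add, m1_smul, p1_smul] at h1 h2 h3 ⊢
    rw [h1, h2, h3]; abel
  · intro i j hi' hj h
    rw [hy_h hi (hc i hi'), hy_h hi (hc j hj), hB, hB]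
    congr 1
    have := gB_far i j h (hJ j hj)
    simp only [mul_add, add_mul, mul_one, one_mul, this]; abel
  · rintro j hj z ⟨h1, h2⟩
    have e : ep * (ep * hB n j * z) = hB n j * (ep * z) := by
      rw [← mul_assoc, ← mul_assoc, hi, hc j hj, mul_assoc]
    refine ⟨?_, ?_⟩
    · rw [e]
      rw [mul_assoc _ z, ← h1, ← mul_assoc, ← hc j hj, mul_assoc ep, ← mul_assoc _ _ z, mul_assoc ep (hB n j) (ep * z), ← mul_assoc (hB n j), ← hc j hj, ← mul_assoc, ← mul_assoc, hi]
    · rw [e]; exact mul_mem (h_mem j (hJ j hj)) h2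
  · rintro j hj z ⟨h1, h2⟩
    have e : ep * (z * (ep * hB n j)) = ep * z * hB n j := by
      rw [← mul_assoc, ← mul_assoc, mul_assoc ep z, ← h1, ← mul_assoc, hi]
    refine ⟨?_, ?_⟩
    · rw [e, h1, mul_assoc, hc j hj, mul_assoc, mul_assoc, hi]
    · rw [e]; exact mul_mem h2 (h_mem j (hJ j hj))

lemma eps_y (hJ : ∀ j ∈ J, j < n) (S : Finset ℕ) (hS : S ⊆ J) (m : ℕ) :
    opr (eU n) J n * opr (fun j => opr (eU n) J n * hB n j) S m = opr (eU n) J n * opr (hB n) S m := by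
  induction m with
  | zero => simp [opr]
  | succ m ih =>
    have hi : opr (eU n) J n * opr (eU n) J n = opr (eU n) J n := eps_idem' J n le_rfl n le_rfl
    have h1 : opr (hB n) S m * opr (eU n) J n = opr (eU n) J n * opr (hB n) S m :=
      opr_comm _ _ _ _ fun i _ hiS => (eps_h J n i le_rfl (hJ i (hS hiS)) (hS hiS)).symm
    rw [opr, opr, ← mul_assoc, ih]
    split_ifs
    · exact hy_h hi h1.symm
    · simp [mul_assoc]

lemma eps_final (hJ : ∀ j ∈ J, j < n)
    (c : ℕ → ℕ) (hc : ∀ j, j ∈ J → j + 1 ∈ J → c j = c (j+1))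
    (hinv : ∀ j ∈ J, ∀ k, (j ≤ k ∧ k ≤ c j) ∨ (c j ≤ k ∧ k ≤ j) → k ∈ J ∧ c k = c j) :
    opr (eU n) J n * opr (hB n) (J.filter fun j => c j = j) n ∈ BTC n := by
  have H := HYJ J hJ
  rw [← eps_y J hJ _ (Finset.filter_subset _ _)]
  refine (reduce H n hJ c hc _ J rfl (Finset.Subset.refl _) (Finset.filter_subset _ _) hinv ?_).2
  have hi : opr (eU n) J n * opr (eU n) J n = opr (eU n) J n := eps_idem' J n le_rfl n le_rfl
  refine ⟨(opr_comm _ _ _ _ fun i _ hiS => ?_).symm, ?_⟩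
  · rw [eps_h J n i le_rfl (hJ i hiS) hiS, mul_assoc, ← eps_h J n i le_rfl (hJ i hiS) hiS, ← mul_assoc]
    rw [mul_assoc, hi, eps_h J n i le_rfl (hJ i hiS) hiS, ← mul_assoc, eps_h J n i le_rfl (hJ i hiS) hiS, mul_assoc, hi]
  · rw [eps_y J hJ J (Finset.Subset.refl _), ← oprP J n le_rfl]
    exact opr_mem _ _ (BTC n).toSubring _ fun i _ hiS => P_mem i (hJ i hiS)
end fixJ
end epsn


section base
variable {n : ℕ}

lemma rep_h (m : ℕ) (h : m < n) (x : MM n) : repBT n (hB n m) x = x + opG n ⟨m, h⟩ x := by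
  rw [hB, gB_val m h, map_add, map_one, repBT_g]; rfl

open Classical in
lemma rep_eps (J : Finset ℕ) (m : ℕ) (hm : m ≤ n) : ∀ (x : MM n) (π : Setoid (Fin (n+1))) (τ : Equiv.Perm (Fin (n+1))),
    repBT n (opr (eU n) J m) x (π, τ) =
      if (∀ i : Fin n, (i : ℕ) < m → (i : ℕ) ∈ J → π (τ i.castSucc) (τ i.succ)) then x (π, τ) else 0 := by
  induction m with
  | zero => intro x π τ; simp [opr]
  | succ m ih =>
    intro x π τ
    have ih := ih (by omega)
    have key : (∀ i : Fin n, (i : ℕ) < m+1 → (i : ℕ) ∈ J → π (τ i.castSucc) (τ i.succ)) ↔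
        (∀ i : Fin n, (i : ℕ) < m → (i : ℕ) ∈ J → π (τ i.castSucc) (τ i.succ)) ∧
        (m ∈ J → π (τ (Fin.castSucc ⟨m, hm⟩)) (τ (Fin.succ ⟨m, hm⟩))) := by
      constructor
      · exact fun h => ⟨fun i hi => h i (by omega), fun hmJ => h ⟨m, hm⟩ (by simp) hmJ⟩
      · rintro ⟨h1, h2⟩ i hi hiJ
        by_cases e : (i : ℕ) = m
        · obtain rfl : i = ⟨m, hm⟩ := Fin.ext e
          exact h2 hiJ
        · exact h1 i (by omega) hiJ
    rw [opr, map_mul, Module.End.mul_apply, ih, if_congr key rfl rfl]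
    split_ifs with h1 h2 h3 h3 h3
    · rw [eU_val n m hm, repBT_e, opE_apply, ga, if_pos (h3.2 h2), one_mul]
    · rw [eU_val n m hm, repBT_e, opE_apply, ga, if_neg (fun hh => h3 ⟨h1, fun _ => hh⟩), zero_mul]
    · simp
    · exact absurd ⟨h1, fun hh => absurd hh h2⟩ h3
    · exact absurd h3.1 h1
    · rfl

/-- permutations preserving the pairs `{t, t+1}` for `t ∈ T` -/
def DT (T : Finset ℕ) (d : Equiv.Perm (Fin (n+1))) : Prop :=
  ∀ k, d k = k ∨ ∃ i : Fin n, (i : ℕ) ∈ T ∧ (k = i.castSucc ∧ d k = i.succ ∨ k = i.succ ∧ d k = i.castSucc)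

def QT (T : Finset ℕ) (τ : Equiv.Perm (Fin (n+1))) (m : ℕ) (x : MM n) : Prop :=
  (∀ π τ', x (π, τ') ≠ 0 → ∃ d : Equiv.Perm (Fin (n+1)), τ' = τ * d ∧ (∀ k : Fin (n+1), (k : ℕ) < m → d k = k) ∧ DT T d) ∧
  ∀ π, x (π, τ) = 1

lemma QT_step (T : Finset ℕ) (τ : Equiv.Perm (Fin (n+1))) (m : ℕ) (hm : m < n) (hT : m ∈ T) (hadj : m + 1 ∉ T)
    (hasc : τ (Fin.castSucc ⟨m, hm⟩) < τ (Fin.succ ⟨m, hm⟩)) (x : MM n) (h : QT T τ (m+1) x) :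
    QT T τ m (repBT n (hB n m) x) := by
  rw [rep_h m hm]
  obtain ⟨h1, h2⟩ := h
  refine ⟨?_, ?_⟩
  · intro π τ' hne
    rw [Pi.add_apply, opG_apply] at hne
    by_cases hx : x (π, τ') = 0
    · have hx2 : x (π, τ' * sw ⟨m, hm⟩) ≠ 0 := by
        intro h0
        rw [hx, h0] at hne
        simp at hne
      obtain ⟨d, e1, e2, e3⟩ := h1 _ _ hx2
      have e1' : τ' = τ * (d * sw ⟨m, hm⟩) := by
        rw [← mul_assoc, ← e1, sw_mul_self']
      have dm : d (Fin.castSucc ⟨m, hm⟩) = Fin.castSucc ⟨m, hm⟩ := e2 _ (by simp)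
      have dm1 : d (Fin.succ ⟨m, hm⟩) = Fin.succ ⟨m, hm⟩ := by
        rcases e3 (Fin.succ ⟨m, hm⟩) with h | ⟨i, hi, ⟨h, h'⟩ | ⟨h, h'⟩⟩
        · exact h
        · have : (i : ℕ) = m + 1 := by
            have := congrArg Fin.val h; simp at this; omega
          rw [this] at hi; exact absurd hi hadj
        · have : i = ⟨m, hm⟩ := (Fin.succ_injective _ h).symm
          subst this
          rw [← dm] at h'
          exact absurd (d.injective h') (sw_ne' _).symm
      refine ⟨_, e1', ?_, ?_⟩
      · intro k hk
        rw [swn]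
        · exact e2 k (by omega)
        · intro h; rw [h] at hk; simp at hk
        · intro h; rw [h] at hk; simp at hk
      · intro k
        by_cases k1 : k = Fin.castSucc ⟨m, hm⟩
        · refine Or.inr ⟨⟨m, hm⟩, hT, Or.inl ⟨k1, ?_⟩⟩
          rw [k1, swl, dm1]
        · by_cases k2 : k = Fin.succ ⟨m, hm⟩
          · refine Or.inr ⟨⟨m, hm⟩, hT, Or.inr ⟨k2, ?_⟩⟩
            rw [k2, swr, dm]
          · rw [swn _ _ k k1 k2]; exact e3 k
    · obtain ⟨d, e1, e2, e3⟩ := h1 _ _ hx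
      exact ⟨d, e1, fun k hk => e2 k (by omega), e3⟩
  · intro π
    rw [Pi.add_apply, opG_apply, h2]
    have hz : x (π, τ * sw ⟨m, hm⟩) = 0 := by
      by_contra hne
      obtain ⟨d, e1, e2, e3⟩ := h1 _ _ hne
      have e4 := mul_left_cancel e1
      have := e2 (Fin.castSucc ⟨m, hm⟩) (by simp)
      rw [← e4, sw_left] at this
      exact sw_ne' _ this.symm
    rw [hz, bt, if_neg (fun hh => lt_asymm hasc hh.2)]
    simp

lemma QT_all (T : Finset ℕ) (τ : Equiv.Perm (Fin (n+1))) (hadj : ∀ t ∈ T, t + 1 ∉ T)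
    (hasc : ∀ i : Fin n, (i : ℕ) ∈ T → τ i.castSucc < τ i.succ) (m : ℕ) : m ≤ n → ∀ x : MM n, QT T τ m x →
    QT T τ 0 (repBT n (opr (hB n) T m) x) := by
  induction m with
  | zero => intro _ x h; simpa [opr] using h
  | succ m ih =>
    intro hm x h
    rw [opr, map_mul, Module.End.mul_apply]
    apply ih (by omega)
    split_ifs with hT
    · exact QT_step T τ m hm hT (hadj _ hT) (hasc ⟨m, hm⟩ hT) x h
    · rw [map_one, Module.End.one_apply]
      exact ⟨fun π τ' hne => by
        obtain ⟨d, e1, e2, e3⟩ := h.1 π τ' hne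
        exact ⟨d, e1, fun k hk => e2 k (by omega), e3⟩, h.2⟩

lemma QT_UU (T : Finset ℕ) (τ : Equiv.Perm (Fin (n+1))) (m : ℕ) : QT T τ m (UU τ) := by
  refine ⟨fun π τ' hne => ⟨1, ?_, fun _ _ => rfl, fun k => Or.inl rfl⟩, fun π => by simp [UU]⟩
  by_contra hc
  rw [mul_one] at hc
  simp [UU, hc] at hne

/-- the triangular vectors -/
def PP (ρ : Setoid (Fin (n+1))) (τ : Equiv.Perm (Fin (n+1))) : Prop :=
  ∃ x ∈ VV n, (∀ π τ', x (π, τ') ≠ 0 → ρ ≤ π) ∧ x (ρ, τ) = 1 ∧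
    ∀ τ', x (ρ, τ') ≠ 0 → ∃ c : Equiv.Perm (Fin (n+1)), τ' = c * τ ∧ (∀ l, ρ (c l) l) ∧ ∀ l, c l < l → τ.symm (c l) < τ.symm l

lemma PP_of (ρ : Setoid (Fin (n+1))) (τ : Equiv.Perm (Fin (n+1))) (hm : Monotone fun k => bl ρ (τ k))
    (J T : Finset ℕ) (hJ : ∀ i : Fin n, (i : ℕ) ∈ J ↔ ρ (τ i.castSucc) (τ i.succ)) (hTJ : T ⊆ J)
    (hadj : ∀ t ∈ T, t + 1 ∉ T)
    (hasc : ∀ i : Fin n, (i : ℕ) ∈ T → τ i.castSucc < τ i.succ)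
    (hC : opr (eU n) J n * opr (hB n) T n ∈ BTC n) : PP ρ τ := by
  classical
  have inv_app : ∀ k, τ⁻¹ (τ k) = k := fun k => τ.symm_apply_apply k
  obtain ⟨q1, q2⟩ := QT_all T τ hadj hasc n le_rfl (UU τ) (QT_UU T τ n)
  refine ⟨repBT n (opr (eU n) J n * opr (hB n) T n) (UU τ), VV_C ?_ (UU_VV τ), ?_, ?_, ?_⟩
  · rw [← Cop_map]; exact ⟨_, hC, rfl⟩
  · intro π τ' hne
    rw [map_mul, Module.End.mul_apply, rep_eps J n le_rfl] at hne
    rw [ne_eq, ite_eq_right_iff, not_forall] at hne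
    obtain ⟨hp, hne⟩ := hne
    obtain ⟨d, rfl, -, hd⟩ := q1 _ _ hne
    have hd' : ∀ k, ρ (τ (d k)) (τ k) := by
      intro k
      rcases hd k with h | ⟨i, hi, ⟨h, h'⟩ | ⟨h, h'⟩⟩
      · rw [h]
      · rw [h', h]; exact ρ.symm ((hJ i).1 (hTJ hi))
      · rw [h', h]; exact ((hJ i).1 (hTJ hi))
    refine le_of_chain (τ := τ * d) ?_ ?_
    · have : (fun k => bl ρ ((τ * d) k)) = fun k => bl ρ (τ k) := by
        ext k; exact (bl_eq ρ _ _).2 (hd' k)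
      rw [this]; exact hm
    · intro i hi
      refine hp i i.2 ((hJ i).2 ?_)
      exact ρ.trans (ρ.symm (hd' _)) (ρ.trans hi (hd' _))
  · rw [map_mul, Module.End.mul_apply, rep_eps J n le_rfl, if_pos fun i _ hi => (hJ i).1 hi]
    exact q2 ρ
  · intro τ' hne
    rw [map_mul, Module.End.mul_apply, rep_eps J n le_rfl] at hne
    rw [ne_eq, ite_eq_right_iff, not_forall] at hne
    obtain ⟨hp, hne⟩ := hne
    obtain ⟨d, rfl, -, hd⟩ := q1 _ _ hne
    refine ⟨τ * d * τ⁻¹, by simp, ?_, ?_⟩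
    · intro l
      obtain ⟨k, rfl⟩ := τ.surjective l
      simp only [Equiv.Perm.mul_apply, inv_app]
      rcases hd k with h | ⟨i, hi, ⟨h, h'⟩ | ⟨h, h'⟩⟩
      · rw [h]
      · rw [h', h]; exact ρ.symm ((hJ i).1 (hTJ hi))
      · rw [h', h]; exact ((hJ i).1 (hTJ hi))
    · intro l
      obtain ⟨k, rfl⟩ := τ.surjective l
      simp only [Equiv.Perm.mul_apply, inv_app, Equiv.symm_apply_apply]
      rcases hd k with h | ⟨i, hi, ⟨h, h'⟩ | ⟨h, h'⟩⟩
      · rw [h]; exact fun h => absurd h (lt_irrefl _)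
      · rw [h', h]; intro hlt; exact absurd hlt (lt_asymm (hasc i hi))
      · rw [h', h]; intro _; simp [Fin.lt_def]

lemma PP_base (ρ : Setoid (Fin (n+1))) (τ : Equiv.Perm (Fin (n+1))) (hg : (ρ, τ) ∈ Gd n)
    (hm : Monotone fun k => bl ρ (τ k)) : PP ρ τ := by
  classical
  let B : ℕ → ℕ := fun k => if h : k < n + 1 then bl ρ (τ ⟨k, h⟩) else 0
  let A : ℕ → ℕ := fun k => if h : k < n + 1 then τ ⟨k, h⟩ else 0
  have hB : ∀ k : Fin (n+1), B k = bl ρ (τ k) := fun k => dif_pos k.2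
  have hA : ∀ k : Fin (n+1), A k = τ k := fun k => dif_pos k.2
  have Bmono : ∀ k l, k ≤ l → l ≤ n → B k ≤ B l := by
    intro k l hkl hl
    have := hm (show (⟨k, by omega⟩ : Fin (n+1)) ≤ ⟨l, by omega⟩ from hkl)
    simp only [← hB] at this
    exact this
  let J : Finset ℕ := (Finset.range n).filter fun j => B j = B (j+1)
  have memJ : ∀ j, j ∈ J ↔ j < n ∧ B j = B (j+1) := fun j => by simp [J]
  have ex : ∀ j ∈ J, ∃ t, t ∈ J ∧ B t = B j ∧ A t < A (t+1) := by
    intro j hj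
    by_contra hcon
    push Not at hcon
    rw [memJ] at hj
    have anti : ∀ d k, k + d + 1 ≤ n → B k = B j → B (k + d + 1) = B j → A (k + d + 1) < A k := by
      have st : ∀ k, k + 1 ≤ n → B k = B j → B (k + 1) = B j → A (k+1) < A k := by
        intro k hk h1 h2
        have := hcon k ((memJ k).2 ⟨by omega, by omega⟩) h1
        refine lt_of_le_of_ne this ?_
        intro he
        have e := hA ⟨k, by omega⟩
        have e' := hA ⟨k+1, by omega⟩
        simp only at e e'
        rw [e, e'] at he
        have := congrArg Fin.val (τ.injective (Fin.ext he))
        simp at this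
      intro d
      induction d with
      | zero => intro k hk h1 h2; exact st k hk h1 h2
      | succ d ih =>
        intro k hk h1 h2
        have m1 := Bmono k (k+d+1) (by omega) (by omega)
        have m2 := Bmono (k+d+1) (k + (d+1) + 1) (by omega) (by omega)
        have h3 : B (k+d+1) = B j := by omega
        exact lt_trans (st (k+d+1) (by omega) h3 h2) (ih k (by omega) h1 h3)
    refine hg (τ ⟨j, by omega⟩) ⟨⟨τ ⟨j+1, by omega⟩, ?_, ?_⟩, ?_⟩
    · rw [← bl_eq, ← hB, ← hB]; exact hj.2
    · intro he; simpa using congrArg Fin.val (τ.injective he)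
    · intro b c hb hc hlt
      obtain ⟨k, rfl⟩ := τ.surjective b
      obtain ⟨l, rfl⟩ := τ.surjective c
      rw [← bl_eq, ← hB, ← hB] at hb hc
      simp only at hb hc
      rw [Equiv.symm_apply_apply, Equiv.symm_apply_apply]
      by_contra hle
      have hne : k ≠ l := by rintro rfl; exact lt_irrefl _ hlt
      have hkl : (k : ℕ) < l := by
        rw [not_lt, Fin.le_def] at hle
        have : (k : ℕ) ≠ l := fun h => hne (Fin.ext h)
        omega
      have hl := l.2
      have := anti (l - k - 1) k (by omega) hb.symm (by rw [show (k:ℕ) + (l - k - 1) + 1 = l by omega]; exact hc.symm)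
      rw [show (k:ℕ) + (l - k - 1) + 1 = l by omega, hA, hA] at this
      rw [Fin.lt_def] at hlt
      omega
  let F : ℕ → ℕ := fun b => if h : ∃ t, t ∈ J ∧ B t = b ∧ A t < A (t+1) then h.choose else 0
  have hF : ∀ j ∈ J, F (B j) ∈ J ∧ B (F (B j)) = B j ∧ A (F (B j)) < A (F (B j) + 1) := by
    intro j hj
    have h := ex j hj
    simp only [F, dif_pos h]
    exact h.choose_spec
  have hJn : ∀ j ∈ J, j < n := fun j hj => ((memJ j).1 hj).1
  refine PP_of ρ τ hm J (J.filter fun j => F (B j) = j) ?_ (Finset.filter_subset _ _) ?_ ?_ 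
    (eps_final J hJn (fun j => F (B j)) ?_ ?_)
  · intro i
    rw [memJ, ← bl_eq, ← hB, ← hB]
    simp
  · intro t ht ht1
    rw [Finset.mem_filter] at ht ht1
    have := ((memJ t).1 ht.1).2
    have e1 := ht.2
    have e2 := ht1.2
    rw [← this] at e2
    omega
  · intro i hi
    rw [Finset.mem_filter] at hi
    have := (hF _ hi.1).2.2
    rw [hi.2] at this
    have e1 := hA i.castSucc
    have e2 := hA i.succ
    simp only [Fin.val_castSucc, Fin.val_succ] at e1 e2
    rw [Fin.lt_def]; omega
  · intro j hj _
    rw [((memJ j).1 hj).2]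
  · intro j hj k hk
    obtain ⟨f1, f2, f3⟩ := hF j hj
    rw [memJ] at f1 hj
    have key : k < n ∧ B k = B j ∧ B (k+1) = B j := by
      rcases hk with ⟨h1, h2⟩ | ⟨h1, h2⟩
      · have m1 := Bmono j k h1 (by omega)
        have m2 := Bmono k (k+1) (by omega) (by omega)
        have m3 := Bmono (k+1) (F (B j) + 1) (by omega) (by omega)
        omega
      · have m1 := Bmono _ k h1 (by omega)
        have m2 := Bmono k (k+1) (by omega) (by omega)
        have m3 := Bmono (k+1) (j + 1) (by omega) (by omega)
        omega
    exact ⟨(memJ k).2 ⟨key.1, by omega⟩, by rw [key.2.1]⟩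

lemma PP_good (ρ : Setoid (Fin (n+1))) (τ : Equiv.Perm (Fin (n+1))) : (ρ, τ) ∈ Gd n → PP ρ τ := by
  refine perm_ind (bl ρ) (fun τ => (ρ, τ) ∈ Gd n → PP ρ τ) ?_ ?_ τ
  · exact fun τ hm hg => PP_base ρ τ hg hm
  · intro τ i hi ih hg
    have hr : ¬ ρ (τ i.castSucc) (τ i.succ) := fun h => by
      rw [(bl_eq ρ _ _).2 h] at hi; exact lt_irrefl _ hi
    have hv1 : (i.succ : ℕ) = i + 1 := Fin.val_succ i
    have hv2 : (i.castSucc : ℕ) = i := Fin.val_castSucc i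
    have ord : ∀ b c, ρ b c → (τ.symm b < τ.symm c ↔ (τ * sw i).symm b < (τ * sw i).symm c) := by
      intro b c hbc
      obtain ⟨k, rfl⟩ := τ.surjective b
      obtain ⟨l, rfl⟩ := τ.surjective c
      have e : ∀ k, (τ * sw i).symm (τ k) = sw i k := by
        intro k
        rw [Equiv.symm_apply_eq, Equiv.Perm.mul_apply, ← Equiv.Perm.mul_apply (sw i), sw_mul_self]; rfl
      rw [e, e, Equiv.symm_apply_apply, Equiv.symm_apply_apply]
      by_cases k1 : k = i.castSucc
      · subst k1
        rw [sw_left]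
        have : l ≠ i.succ := by rintro rfl; exact hr hbc
        by_cases l1 : l = i.castSucc
        · subst l1; rw [sw_left]; simp
        · rw [sw_of_ne i l l1 this]
          simp only [Fin.lt_def, Fin.ext_iff] at *; omega
      · by_cases k2 : k = i.succ
        · subst k2
          rw [sw_right]
          have : l ≠ i.castSucc := by rintro rfl; exact hr (ρ.symm hbc)
          by_cases l1 : l = i.succ
          · subst l1; rw [sw_right]; simp
          · rw [sw_of_ne i l this l1]
            simp only [Fin.lt_def, Fin.ext_iff] at *; omega
        · rw [sw_of_ne i k k1 k2]
          by_cases l1 : l = i.castSucc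
          · subst l1; rw [sw_left]
            simp only [Fin.lt_def, Fin.ext_iff] at *; omega
          · by_cases l2 : l = i.succ
            · subst l2; rw [sw_right]
              simp only [Fin.lt_def, Fin.ext_iff] at *; omega
            · rw [sw_of_ne i l l1 l2]
    have hg' : (ρ, τ * sw i) ∈ Gd n := by
      intro a ha
      refine hg a ⟨ha.1, fun b c hb hc hlt => ?_⟩
      exact (ord c b (ρ.trans (ρ.symm hc) hb)).2 (ha.2 b c hb hc hlt)
    obtain ⟨x, hx, h1, h2, h3⟩ := ih hg'
    refine ⟨opG n i x, VV_G i hx, ?_, ?_, ?_⟩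
    · intro π τ' hne
      rw [opG_apply] at hne
      by_cases hz : x (π, τ') = 0
      · refine h1 π (τ' * sw i) fun h0 => hne ?_
        rw [hz, h0]; simp
      · exact h1 _ _ hz
    · rw [opG_apply, h2, al_nr hr, bt_nr hr]; simp
    · intro τ' hne
      have main : x (ρ, τ' * sw i) ≠ 0 := by
        intro h0
        rw [opG_apply, h0, mul_zero, zero_add] at hne
        have hz : x (ρ, τ') ≠ 0 := fun h => hne (by rw [h, mul_zero])
        obtain ⟨c, e1, e2, e3⟩ := h3 _ hz
        apply hne
        rw [bt_nr, zero_mul]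
        intro hh
        rw [e1] at hh
        rw [← mul_assoc, swl, swr] at hh
        exact hr (ρ.symm (ρ.trans (ρ.symm (e2 _)) (ρ.trans hh (e2 _))))
      obtain ⟨c, e1, e2, e3⟩ := h3 _ main
      refine ⟨c, ?_, e2, fun l hl => (ord _ _ (e2 l)).2 (e3 l hl)⟩
      rw [← mul_assoc] at e1
      exact mul_sw_eq.1 e1
end base


section lower
variable {n : ℕ}

lemma lex_of {τ c : Equiv.Perm (Fin (n+1))} (h : ∀ l, c l < l → τ.symm (c l) < τ.symm l) :
    c * τ = τ ∨ toLex (⇑τ) < toLex (⇑(c * τ)) := by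
  by_cases he : c * τ = τ
  · exact Or.inl he
  right
  have hex : ∃ k, (c * τ) k ≠ τ k := by
    by_contra hc
    push Not at hc
    exact he (Equiv.ext hc)
  obtain ⟨k, hk, hmin⟩ := WellFounded.has_min (wellFounded_lt (α := Fin (n+1))) {k | (c * τ) k ≠ τ k} hex
  have hmin' : ∀ j, j < k → τ j = (c * τ) j := by
    intro j hj
    by_contra hc
    exact hmin j (fun h => hc h.symm) hj
  refine ⟨k, hmin', ?_⟩
  change τ k < (c * τ) k
  by_contra hlt
  have hlt' : c (τ k) < τ k := lt_of_le_of_ne (not_lt.1 hlt) hk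
  have := h _ hlt'
  rw [Equiv.symm_apply_apply] at this
  have h2 := hmin' _ this
  rw [Equiv.apply_symm_apply] at h2
  have h3 := (c * τ).injective h2
  rw [← h3] at this
  exact lt_irrefl _ this

theorem VV_ge : Nat.card (Gd n) ≤ Module.finrank Kv (VV n) := by
  classical
  haveI := Fintype.ofFinite (Gd n)
  have hP : ∀ p : Gd n, PP p.1.1 p.1.2 := fun p => PP_good _ _ p.2
  choose x hx h1 h2 h3 using hP
  have hli : LinearIndependent Kv (fun p : Gd n => (⟨x p, hx p⟩ : VV n)) := by
    rw [linearIndependent_iff']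
    intro s a hsum
    by_contra hcon
    push Not at hcon
    let key : Gd n → Lex (Setoid (Fin (n+1)) × Lex (Fin (n+1) → Fin (n+1))) := fun p => toLex (p.1.1, toLex ⇑p.1.2)
    have hne : (s.filter fun p => a p ≠ 0).Nonempty := by
      obtain ⟨p, hp, hp'⟩ := hcon
      exact ⟨p, Finset.mem_filter.2 ⟨hp, hp'⟩⟩
    obtain ⟨p, hp, hmin⟩ := Finset.exists_minimalFor key _ hne
    rw [Finset.mem_filter] at hp
    have hs := congrArg (fun y : VV n => (y : MM n) p.1) hsum
    simp only [Submodule.coe_sum, Finset.sum_apply, Submodule.coe_smul, Pi.smul_apply, ZeroMemClass.coe_zero,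
      Pi.zero_apply, smul_eq_mul] at hs
    rw [Finset.sum_eq_single_of_mem p hp.1] at hs
    · have := h2 p
      rw [show p.1 = (p.1.1, p.1.2) from rfl, this, mul_one] at hs
      exact hp.2 hs
    · intro q hq hqp
      by_contra hz
      have ha : a q ≠ 0 := left_ne_zero_of_mul hz
      have hxq : x q (p.1.1, p.1.2) ≠ 0 := right_ne_zero_of_mul hz
      have hqs : q ∈ s.filter fun p => a p ≠ 0 := Finset.mem_filter.2 ⟨hq, ha⟩
      have hle := h1 q _ _ hxq
      have hlt : key q < key p := by
        rw [Prod.Lex.lt_iff]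
        rcases lt_or_eq_of_le hle with h | h
        · exact Or.inl h
        · right
          refine ⟨h, ?_⟩
          rw [← h] at hxq
          obtain ⟨c, e1, e2, e3⟩ := h3 q _ hxq
          rcases lex_of e3 with h4 | h4
          · exfalso; apply hqp
            rw [h4] at e1
            exact Subtype.ext (Prod.ext h e1.symm)
          · change toLex ⇑q.1.2 < toLex ⇑p.1.2
            rw [e1]; exact h4
      exact absurd (hmin hqs hlt.le) (not_le_of_gt hlt)
  have := hli.fintype_card_le_finrank
  rwa [← Nat.card_eq_fintype_card] at this

theorem finrank_BTC_card (n : ℕ) : Module.finrank Kv (BTC n) = Nat.card (Gd n) :=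
  finrank_BTC.trans (le_antisymm VV_le VV_ge)
end lower


section cnt

lemma ex_sort {X : Type} [Fintype X] (u : X → ℕ) (hu : Function.Injective u) :
    ∃ e : Fin (Fintype.card X) ≃ X, StrictMono (fun k => u (e k)) := by
  let f : Fin (Fintype.card X) → ℕ := u ∘ (Fintype.equivFin X).symm
  refine ⟨(Tuple.sort f).trans (Fintype.equivFin X).symm, ?_⟩
  refine Monotone.strictMono_of_injective (Tuple.monotone_sort f) ?_
  intro a b hab
  exact (Equiv.injective _) (hu hab)

lemma uniq_dec {X : Type} [Fintype X] (u w : X → ℕ) (hu : Function.Injective u) (hw : Function.Injective w) :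
    ∃! σ : Equiv.Perm X, ∀ b c, u b < u c → w (σ c) < w (σ b) := by
  obtain ⟨e1, h1⟩ := ex_sort u hu
  obtain ⟨e2, h2⟩ := ex_sort w hw
  have anti : ∀ σ : Equiv.Perm X, (∀ b c, u b < u c → w (σ c) < w (σ b)) →
      StrictMono (fun k : Fin (Fintype.card X) => w (σ (e1 k.rev))) := by
    intro σ hσ k l hkl
    exact hσ _ _ (h1 (Fin.rev_lt_rev.2 hkl))
  refine ⟨(e1.symm.trans Fin.revPerm).trans e2, ?_, ?_⟩
  · intro b c hbc
    obtain ⟨k, rfl⟩ := e1.surjective b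
    obtain ⟨l, rfl⟩ := e1.surjective c
    have hkl : k < l := h1.lt_iff_lt.1 hbc
    simp only [Equiv.trans_apply, Equiv.symm_apply_apply, Fin.revPerm_apply]
    exact h2 (Fin.rev_lt_rev.2 hkl)
  · intro σ hσ
    have a1 := anti σ hσ
    have r : Set.range (fun k : Fin (Fintype.card X) => w (σ (e1 k.rev))) = Set.range (fun k => w (e2 k)) := by
      have e1' : (fun k : Fin (Fintype.card X) => w (σ (e1 k.rev))) = w ∘ ((Fin.revPerm.trans e1).trans σ) := rfl
      have e2' : (fun k => w (e2 k)) = w ∘ e2 := rfl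
      rw [e1', e2', Set.range_comp, Set.range_comp, Equiv.range_eq_univ, Equiv.range_eq_univ]
    have := (a1.range_inj h2).1 r
    ext x
    obtain ⟨k, rfl⟩ := e1.surjective x
    have hk := congrFun this k.rev
    simp only [Fin.rev_rev] at hk
    rw [hw hk]
    simp

def cw (b : ℕ) : ℕ := if b ≤ 1 then 1 else b.factorial - 1

lemma card_dec {X : Type} [Fintype X] [DecidableEq X] [Nonempty X] (u w : X → ℕ) (hu : Function.Injective u) (hw : Function.Injective w) :
    Nat.card {σ : Equiv.Perm X // ¬ (1 < Fintype.card X ∧ ∀ b c, u b < u c → w (σ c) < w (σ b))} = cw (Fintype.card X) := by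
  classical
  rw [Nat.card_eq_fintype_card, Fintype.card_subtype_compl, Fintype.card_perm, cw]
  split_ifs with h
  · have : Fintype.card X = 1 := le_antisymm h Fintype.card_pos
    rw [this]
    rw [Fintype.card_eq_zero_iff.2 ⟨fun x => by have := x.2.1; omega⟩]; rfl
  · congr 1
    obtain ⟨σ, h1, h2⟩ := uniq_dec u w hu hw
    rw [Fintype.card_eq_one_iff]
    exact ⟨⟨σ, by omega, h1⟩, fun y => Subtype.ext (h2 _ y.2.2)⟩

variable {n : ℕ}
/-- the quotient map -/
def qm {N : ℕ} (ρ : Setoid (Fin N)) : Fin N → Quotient ρ := fun a => Quotient.mk ρ a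

open Classical in
theorem card_good (ρ : Setoid (Fin (n+1))) [Fintype (Quotient ρ)] :
    Nat.card {τ : Equiv.Perm (Fin (n+1)) // ∀ a, ¬ dec ρ τ a} * ∏ q : Quotient ρ, (Fintype.card {a // qm ρ a = q}).factorial =
    (n+1).factorial * ∏ q : Quotient ρ, cw (Fintype.card {a // qm ρ a = q}) := by
  let Fam := ∀ q : Quotient ρ, Equiv.Perm {a // qm ρ a = q}
  let A : Fam → Equiv.Perm (Fin (n+1)) := fun g => DomMulAct.stabilizerEquiv_invFun_aux g
  have hA : ∀ (g : Fam) (q) (x : {a // qm ρ a = q}), A g x = g q x := fun g q x =>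
    DomMulAct.stabilizerEquiv_invFun_eq g x.2
  have hFam : Nat.card Fam = ∏ q : Quotient ρ, (Fintype.card {a // qm ρ a = q}).factorial := by
    rw [Nat.card_pi]
    exact Finset.prod_congr rfl fun q _ => by rw [Nat.card_eq_fintype_card, Fintype.card_perm]
  have c1 : Nat.card {p : Equiv.Perm (Fin (n+1)) × Fam // ∀ a, ¬ dec ρ ((A p.2)⁻¹ * p.1) a} =
      Nat.card {τ : Equiv.Perm (Fin (n+1)) // ∀ a, ¬ dec ρ τ a} * Nat.card Fam := by
    rw [← Nat.card_prod]
    refine Nat.card_congr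
      { toFun := fun p => (⟨(A p.1.2)⁻¹ * p.1.1, p.2⟩, p.1.2)
        invFun := fun p => ⟨(A p.2 * p.1.1, p.2), by simpa using p.1.2⟩
        left_inv := fun p => by ext <;> simp
        right_inv := fun p => by ext <;> simp }
  have c2 : Nat.card {p : Equiv.Perm (Fin (n+1)) × Fam // ∀ a, ¬ dec ρ ((A p.2)⁻¹ * p.1) a} =
      ∑ τ : Equiv.Perm (Fin (n+1)), Nat.card {g : Fam // ∀ a, ¬ dec ρ ((A g)⁻¹ * τ) a} := by
    rw [← Nat.card_sigma]
    refine Nat.card_congr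
      { toFun := fun p => ⟨p.1.1, p.1.2, p.2⟩
        invFun := fun p => ⟨(p.1, p.2.1), p.2.2⟩
        left_inv := fun p => rfl
        right_inv := fun p => rfl }
  have c3 : ∀ τ : Equiv.Perm (Fin (n+1)), Nat.card {g : Fam // ∀ a, ¬ dec ρ ((A g)⁻¹ * τ) a} =
      ∏ q : Quotient ρ, cw (Fintype.card {a // qm ρ a = q}) := by
    intro τ
    have key : ∀ g : Fam, (∀ a, ¬ dec ρ ((A g)⁻¹ * τ) a) ↔ ∀ q, ¬ (1 < Fintype.card {a // qm ρ a = q} ∧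
        ∀ b c : {a // qm ρ a = q}, (b : Fin (n+1)).val < (c : Fin (n+1)).val → (τ.symm (g q c)).val < (τ.symm (g q b)).val) := by
      intro g
      have hs : ∀ c, ((A g)⁻¹ * τ).symm c = τ.symm (A g c) := by
        intro c
        rw [Equiv.symm_apply_eq, Equiv.Perm.mul_apply, Equiv.apply_symm_apply]
        exact ((A g).symm_apply_apply c).symm
      have hd : ∀ a, dec ρ ((A g)⁻¹ * τ) a ↔ (1 < Fintype.card {b // qm ρ b = qm ρ a} ∧
        ∀ b c : {b // qm ρ b = qm ρ a}, (b : Fin (n+1)).val < (c : Fin (n+1)).val → (τ.symm (g _ c)).val < (τ.symm (g _ b)).val) := by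
        intro a
        have hq : ∀ b, qm ρ b = qm ρ a ↔ ρ a b := fun b => by
          unfold qm; rw [Quotient.eq]; exact ⟨ρ.symm, ρ.symm⟩
        unfold _root_.dec
        refine and_congr ?_ ?_
        · rw [Fintype.one_lt_card_iff]
          constructor
          · rintro ⟨b, h, hne⟩
            exact ⟨⟨b, (hq b).2 h⟩, ⟨a, rfl⟩, fun h => hne (congrArg Subtype.val h)⟩
          · rintro ⟨b, c, hne⟩
            by_cases hb : b.1 = a
            · refine ⟨c, (hq c).1 c.2, fun h => hne (Subtype.ext (hb.trans h.symm))⟩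
            · exact ⟨b, (hq b).1 b.2, hb⟩
        · constructor
          · intro h b c hbc
            have := h b c ((hq b).1 b.2) ((hq c).1 c.2) hbc
            rwa [hs, hs, hA, hA] at this
          · intro h b c hb hc hbc
            have := h ⟨b, (hq b).2 hb⟩ ⟨c, (hq c).2 hc⟩ hbc
            rw [hs, hs]
            rw [← hA, ← hA] at this
            exact this
      constructor
      · intro h q
        obtain ⟨a, rfl⟩ := Quotient.exists_rep q
        exact fun hh => h a ((hd a).2 hh)
      · intro h a hh
        exact h _ ((hd a).1 hh)
    rw [Nat.card_congr (Equiv.subtypeEquivRight key), Nat.card_congr (Equiv.subtypePiEquivPi (p := fun q (σ : Equiv.Perm {a // qm ρ a = q}) => ¬ (1 < Fintype.card {a // qm ρ a = q} ∧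
        ∀ b c : {a // qm ρ a = q}, (b : Fin (n+1)).val < (c : Fin (n+1)).val → (τ.symm (σ c)).val < (τ.symm (σ b)).val))), Nat.card_pi]
    refine Finset.prod_congr rfl fun q _ => ?_
    haveI : Nonempty {a // qm ρ a = q} := by
      obtain ⟨a, ha⟩ := Quotient.exists_rep q
      exact ⟨⟨a, ha⟩⟩
    exact card_dec (X := {a // qm ρ a = q}) (fun b => (b : Fin (n+1)).val) (fun b => (τ.symm (b : Fin (n+1))).val)
      (fun a b h => Subtype.ext (Fin.ext h)) (fun a b h => Subtype.ext (τ.symm.injective (Fin.ext h)))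
  rw [← hFam, ← c1, c2, Finset.sum_congr rfl fun τ _ => c3 τ, Finset.sum_const, Finset.card_univ, Fintype.card_perm,
    Fintype.card_fin, smul_eq_mul]
end cnt


section cnt2

/-- multiset of fibre sizes -/
def szf {N : ℕ} {β : Type} [Fintype β] (g : Fin N → β) : Multiset ℕ :=
  (Finset.univ : Finset β).val.map (fun q => Nat.card {a // g a = q})

instance quotFintype {N : ℕ} (ρ : Setoid (Fin N)) : Fintype (Quotient ρ) := Fintype.ofFinite _

/-- block sizes -/
def sizes {N : ℕ} (ρ : Setoid (Fin N)) : Multiset ℕ := szf (qm ρ)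

lemma szf_equiv {N : ℕ} {β γ : Type} [Fintype β] [Fintype γ] (g : Fin N → β) (e : β ≃ γ) :
    szf (fun a => e (g a)) = szf g := by
  unfold szf
  rw [← Finset.map_univ_equiv e, Finset.map_val, Multiset.map_map]
  refine Multiset.map_congr rfl fun q _ => ?_
  refine Nat.card_congr (Equiv.subtypeEquivRight fun a => ?_)
  simp

lemma sizes_ker {N : ℕ} {β : Type} [Fintype β] (g : Fin N → β) (hg : Function.Surjective g) :
    sizes (Setoid.ker g) = szf g := by
  have := szf_equiv (qm (Setoid.ker g)) (Setoid.quotientKerEquivOfSurjective g hg)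
  unfold sizes
  rw [← this]
  rfl

lemma card_snoc {N : ℕ} {β : Type} [DecidableEq β] (g : Fin N → β) (q p : β) :
    Nat.card {a : Fin (N+1) // Fin.snoc (α := fun _ => β) g q a = p} =
      Nat.card {a // g a = p} + if p = q then 1 else 0 := by
  simp only [Nat.card_eq_fintype_card, Fintype.card_subtype, Finset.card_filter]
  rw [Fin.sum_univ_castSucc]
  simp [eq_comm]

lemma szf_snoc {N : ℕ} {β : Type} [Fintype β] (g : Fin N → β) (q : β) :
    szf (Fin.snoc (α := fun _ => β) g q) =
      (Nat.card {a // g a = q} + 1) ::ₘ (szf g).erase (Nat.card {a // g a = q}) := by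
  classical
  have hu : (Finset.univ : Finset β).val = q ::ₘ (Finset.univ.erase q).val := by
    rw [Finset.erase_val, Multiset.cons_erase (Finset.mem_univ q)]
  unfold szf
  rw [hu, Multiset.map_cons, Multiset.map_cons, Multiset.erase_cons_head, card_snoc, if_pos rfl]
  congr 1
  refine Multiset.map_congr rfl fun p hp => ?_
  rw [card_snoc, if_neg (Finset.ne_of_mem_erase hp)]
  rfl

lemma szf_snoc_none {N : ℕ} {β : Type} [Fintype β] (g : Fin N → β) :
    szf (Fin.snoc (α := fun _ => Option β) (fun a => some (g a)) none) = 1 ::ₘ szf g := by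
  classical
  have hu : (Finset.univ : Finset (Option β)).val = none ::ₘ (Finset.univ : Finset β).val.map some := by
    rfl
  unfold szf
  rw [hu, Multiset.map_cons, Multiset.map_map, card_snoc, if_pos rfl]
  congr 1
  · simp
  refine Multiset.map_congr rfl fun p hp => ?_
  rw [Function.comp_apply, card_snoc, if_neg (by simp), add_zero]
  exact Nat.card_congr (Equiv.subtypeEquivRight fun a => by simp)

/-- extension of a partition by one point -/
def extP {N : ℕ} (x : Σ ρ : Setoid (Fin N), Option (Quotient ρ)) : Setoid (Fin (N+1)) :=
  Setoid.ker (Fin.snoc (α := fun _ => Option (Quotient x.1)) (fun a => some (qm x.1 a)) x.2)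

lemma qm_eq {N : ℕ} (ρ : Setoid (Fin N)) (a b) : qm ρ a = qm ρ b ↔ ρ a b := by
  unfold qm; rw [Quotient.eq]

lemma extP_cc {N : ℕ} (ρ : Setoid (Fin N)) (o) (a b : Fin N) : extP ⟨ρ, o⟩ a.castSucc b.castSucc ↔ ρ a b := by
  unfold extP
  rw [Setoid.ker_def]
  simp [qm_eq]

lemma extP_lc {N : ℕ} (ρ : Setoid (Fin N)) (o) (b : Fin N) : extP ⟨ρ, o⟩ (Fin.last N) b.castSucc ↔ o = some (qm ρ b) := by
  unfold extP
  rw [Setoid.ker_def]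
  simp

lemma extP_bij (N : ℕ) : Function.Bijective (extP (N := N)) := by
  constructor
  · rintro ⟨ρ, o⟩ ⟨ρ', o'⟩ h
    have : ρ = ρ' := by
      ext a b
      rw [← extP_cc ρ o, ← extP_cc ρ' o', h]
    subst this
    congr 1
    ext q
    obtain ⟨a, rfl⟩ := Quotient.exists_rep q
    change o = some (qm ρ a) ↔ o' = some (qm ρ a)
    rw [← extP_lc, ← extP_lc, h]
  · intro ρ'
    have key : ∃ o : Option (Quotient (Setoid.comap Fin.castSucc ρ')), ∀ b : Fin N, o = some (qm _ b) ↔ ρ' (Fin.last N) b.castSucc := by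
      by_cases h : ∃ a : Fin N, ρ' (Fin.last N) a.castSucc
      · obtain ⟨a, ha⟩ := h
        refine ⟨some (qm _ a), fun b => ?_⟩
        rw [Option.some_inj, qm_eq, Setoid.comap_rel]
        exact ⟨fun h => ρ'.trans ha h, fun h => ρ'.trans (ρ'.symm ha) h⟩
      · refine ⟨none, fun b => ?_⟩
        push Not at h
        simp [h b]
    obtain ⟨o, ho⟩ := key
    refine ⟨⟨_, o⟩, ?_⟩
    ext a b
    induction a using Fin.lastCases with
    | last =>
      induction b using Fin.lastCases with
      | last => exact ⟨fun _ => ρ'.refl _, fun _ => Setoid.refl' _ _⟩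
      | cast b => rw [extP_lc, ho]
    | cast a =>
      induction b using Fin.lastCases with
      | last =>
        rw [Setoid.comm', extP_lc, ho, Setoid.comm']
      | cast b => rw [extP_cc, Setoid.comap_rel]

lemma qm_surj {N : ℕ} (ρ : Setoid (Fin N)) : Function.Surjective (qm ρ) := Quotient.exists_rep

lemma sizes_none {N : ℕ} (ρ : Setoid (Fin N)) : sizes (extP ⟨ρ, none⟩) = 1 ::ₘ sizes ρ := by
  unfold extP
  rw [sizes_ker, szf_snoc_none]; rfl
  intro o
  cases o with
  | none => exact ⟨Fin.last N, by simp⟩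
  | some q =>
    obtain ⟨a, rfl⟩ := qm_surj ρ q
    exact ⟨a.castSucc, by simp⟩

lemma sizes_some {N : ℕ} (ρ : Setoid (Fin N)) (q) : sizes (extP ⟨ρ, some q⟩) =
    (Nat.card {a // qm ρ a = q} + 1) ::ₘ (sizes ρ).erase (Nat.card {a // qm ρ a = q}) := by
  have : extP ⟨ρ, some q⟩ = Setoid.ker (Fin.snoc (α := fun _ => Quotient ρ) (qm ρ) q) := by
    unfold extP
    ext a b
    rw [Setoid.ker_def, Setoid.ker_def]
    induction a using Fin.lastCases <;> induction b using Fin.lastCases <;> simp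
  rw [this, sizes_ker, szf_snoc]; rfl
  intro q
  obtain ⟨a, rfl⟩ := qm_surj ρ q
  exact ⟨a.castSucc, by simp⟩

instance setoidFintype (N : ℕ) : Fintype (Setoid (Fin N)) := Fintype.ofFinite _

/-- all ways to increase one entry -/
def incs : List ℕ → List (List ℕ)
  | [] => []
  | b :: l => ((b+1) :: l) :: (incs l).map (fun m => b :: m)

/-- block size lists of all partitions of an `N`-element set -/
def bsl : ℕ → List (List ℕ)
  | 0 => [[]]
  | N+1 => (bsl N).flatMap (fun l => (1 :: l) :: incs l)

lemma sum_incs (l : List ℕ) : ∀ F : Multiset ℕ → ℕ,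
    (((l : Multiset ℕ)).map (fun b => F ((b+1) ::ₘ (l : Multiset ℕ).erase b))).sum =
      ((incs l).map (fun m : List ℕ => F (m : Multiset ℕ))).sum := by
  induction l with
  | nil => intro F; simp [incs]
  | cons b l ih =>
    intro F
    rw [← Multiset.cons_coe, Multiset.map_cons, Multiset.sum_cons, Multiset.erase_cons_head, incs, List.map_cons, List.sum_cons,
      List.map_map]
    congr 1
    have := ih (fun m => F (b ::ₘ m))
    refine Eq.trans ?_ (this.trans ?_)
    · congr 1
      refine Multiset.map_congr rfl fun c hc => ?_
      rw [Multiset.erase_cons_tail_of_mem hc, Multiset.cons_swap]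
    · rfl

lemma sum_sizes (N : ℕ) : ∀ F : Multiset ℕ → ℕ,
    ∑ ρ : Setoid (Fin N), F (sizes ρ) = ((bsl N).map (fun m : List ℕ => F (m : Multiset ℕ))).sum := by
  induction N with
  | zero =>
    intro F
    haveI : Subsingleton (Setoid (Fin 0)) := ⟨fun a b => by ext x; exact x.elim0⟩
    rw [Fintype.sum_subsingleton _ (⊥ : Setoid (Fin 0))]
    have : sizes (⊥ : Setoid (Fin 0)) = 0 := by
      unfold sizes szf
      rw [Multiset.map_eq_zero]
      have : IsEmpty (Quotient (⊥ : Setoid (Fin 0))) := ⟨fun q => by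
        obtain ⟨a, -⟩ := qm_surj _ q
        exact a.elim0⟩
      rw [Finset.univ_eq_empty]; rfl
    rw [this]
    simp [bsl]
  | succ N ih =>
    intro F
    rw [← Equiv.sum_comp (Equiv.ofBijective _ (extP_bij N)), Fintype.sum_sigma]
    have h1 : ∀ ρ : Setoid (Fin N), ∑ o : Option (Quotient ρ), F (sizes (Equiv.ofBijective _ (extP_bij N) ⟨ρ, o⟩)) =
        (fun m : Multiset ℕ => F (1 ::ₘ m) + (m.map (fun b => F ((b+1) ::ₘ m.erase b))).sum) (sizes ρ) := by
      intro ρ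
      rw [Fintype.sum_option]
      simp only [Equiv.ofBijective_apply, sizes_none, sizes_some]
      congr 1
      conv_rhs => rw [show Multiset.map (fun b => F ((b+1) ::ₘ (sizes ρ).erase b)) (sizes ρ) =
        Multiset.map (fun b => F ((b+1) ::ₘ (sizes ρ).erase b)) ((Finset.univ : Finset (Quotient ρ)).val.map (fun q => Nat.card {a // qm ρ a = q})) from rfl,
        Multiset.map_map]
      rfl
    rw [Finset.sum_congr rfl fun ρ _ => h1 ρ]
    refine (ih (fun m : Multiset ℕ => F (1 ::ₘ m) + (m.map (fun b => F ((b+1) ::ₘ m.erase b))).sum)).trans ?_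
    rw [bsl]
    generalize bsl N = L
    induction L with
    | nil => rfl
    | cons l L ihL =>
      rw [List.flatMap_cons, List.map_append, List.sum_append, List.map_cons, List.sum_cons, ihL]
      congr 1
      rw [List.map_cons, List.sum_cons, sum_incs]
      rfl

/-- number of good permutations for block sizes `l` -/
def cntl (N : ℕ) (l : List ℕ) : ℕ := N.factorial * (l.map cw).prod / (l.map Nat.factorial).prod

theorem card_Gd (n : ℕ) : Nat.card (Gd n) = ((bsl (n+1)).map (cntl (n+1))).sum := by
  have e : Gd n ≃ Σ ρ : Setoid (Fin (n+1)), {τ : Equiv.Perm (Fin (n+1)) // ∀ a, ¬ dec ρ τ a} :=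
    { toFun := fun p => ⟨p.1.1, p.1.2, p.2⟩
      invFun := fun p => ⟨(p.1, p.2.1), p.2.2⟩
      left_inv := fun p => rfl
      right_inv := fun p => rfl }
  rw [Nat.card_congr e, Nat.card_sigma]
  have h := sum_sizes (n+1) (fun m => (n+1).factorial * (m.map cw).prod / (m.map Nat.factorial).prod)
  refine Eq.trans ?_ (h.trans ?_)
  · refine Finset.sum_congr rfl fun ρ _ => ?_
    have hg := card_good ρ
    symm
    have hp : ∀ f : ℕ → ℕ, ((sizes ρ).map f).prod = ∏ q : Quotient ρ, f (Nat.card {a // qm ρ a = q}) := by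
      intro f
      unfold sizes szf
      rw [Multiset.map_map]
      rfl
    rw [hp, hp]
    simp only [← Nat.card_eq_fintype_card] at hg
    rw [← hg]
    exact Nat.mul_div_cancel _ (Finset.prod_pos fun q _ => Nat.factorial_pos _)
  · congr 1

end cnt2

theorem eval_1 : ((bsl 2).map (cntl 2)).sum = 3 := by decide +kernel
theorem eval_2 : ((bsl 3).map (cntl 3)).sum = 20 := by decide +kernel
theorem eval_3 : ((bsl 4).map (cntl 4)).sum = 217 := by decide +kernel
theorem eval_4 : ((bsl 5).map (cntl 5)).sum = 3364 := by decide +kernel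
theorem eval_5 : ((bsl 6).map (cntl 6)).sum = 71098 := by decide +kernel
theorem eval_6 : ((bsl 7).map (cntl 7)).sum = 1960867 := by decide +kernel


/-- The dimension of `𝒞_n(v)` over `ℂ(v)` equals
`3, 20, 217, 3364, 71098, 1960867` for `n = 1, 2, 3, 4, 5, 6`. -/
theorem dim_braid_image_small_rank :
    Module.finrank Kv ↥(BTC 1) = 3 ∧
    Module.finrank Kv ↥(BTC 2) = 20 ∧
    Module.finrank Kv ↥(BTC 3) = 217 ∧
    Module.finrank Kv ↥(BTC 4) = 3364 ∧
    Module.finrank Kv ↥(BTC 5) = 71098 ∧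
    Module.finrank Kv ↥(BTC 6) = 1960867 := by
  simp only [finrank_BTC_card, card_Gd]
  exact ⟨eval_1, eval_2, eval_3, eval_4, eval_5, eval_6⟩
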